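/- arXiv:1103.6101 — 4 statements merged into one kernel-verified Lean document; each statement's English description precedes it below -/
import Mathlib

section
/- Let U be an open, isotropic and bounded subset of ℝ^{2×2}. Then U^{rc} = U^{pc} = Pco U. -/
open scoped BigOperators

/-- Square of the Frobenius norm of a 2×2 real matrix. -/
noncomputable def frobSq (ξ : Matrix (Fin 2) (Fin 2) ℝ) : ℝ := ∑ i, ∑ j, (ξ i j) ^ 2

/-- The Frobenius norm of a 2×2 real matrix. -/
noncomputable def frobNorm (ξ : Matrix (Fin 2) (Fin 2) ℝ) : ℝ := Real.sqrt (frobSq ξ)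

/-- The smallest singular value of a 2×2 real matrix. -/
noncomputable def lam1 (ξ : Matrix (Fin 2) (Fin 2) ℝ) : ℝ :=
  (Real.sqrt (frobSq ξ + 2 * |ξ.det|) - Real.sqrt (frobSq ξ - 2 * |ξ.det|)) / 2

/-- The largest singular value of a 2×2 real matrix. -/
noncomputable def lam2 (ξ : Matrix (Fin 2) (Fin 2) ℝ) : ℝ :=
  (Real.sqrt (frobSq ξ + 2 * |ξ.det|) + Real.sqrt (frobSq ξ - 2 * |ξ.det|)) / 2

/-- A function on 2×2 matrices is rank one convex if it is convex along rank one segments. -/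
def RankOneConvex (f : Matrix (Fin 2) (Fin 2) ℝ → ℝ) : Prop :=
  ∀ (ξ η : Matrix (Fin 2) (Fin 2) ℝ) (t : ℝ), t ∈ Set.Icc (0 : ℝ) 1 →
    (ξ - η).rank = 1 → f (t • ξ + (1 - t) • η) ≤ t * f ξ + (1 - t) * f η

/-- The rank one convex hull `E^{rc}` of a set of 2×2 matrices. -/
def rcHull (E : Set (Matrix (Fin 2) (Fin 2) ℝ)) : Set (Matrix (Fin 2) (Fin 2) ℝ) :=
  {ξ | ∀ f : Matrix (Fin 2) (Fin 2) ℝ → ℝ,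
    RankOneConvex f → (∀ η ∈ E, f η ≤ 0) → f ξ ≤ 0}

/-- The rank one convex hull `U^{rc}` of an open set of 2×2 matrices. -/
def rcHullOpen (U : Set (Matrix (Fin 2) (Fin 2) ℝ)) : Set (Matrix (Fin 2) (Fin 2) ℝ) :=
  {ξ | ∃ E : Set (Matrix (Fin 2) (Fin 2) ℝ), E ⊆ U ∧ IsCompact E ∧ ξ ∈ rcHull E}

/-- A function on 2×2 matrices is polyconvex if it is a convex function of (ξ, det ξ). -/
def PolyconvexFun (f : Matrix (Fin 2) (Fin 2) ℝ → ℝ) : Prop :=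
  ∃ g : Matrix (Fin 2) (Fin 2) ℝ × ℝ → ℝ,
    ConvexOn ℝ Set.univ g ∧ ∀ ξ, f ξ = g (ξ, ξ.det)

/-- The polyconvex hull `E^{pc}` of a set of 2×2 matrices. -/
def pcHull (E : Set (Matrix (Fin 2) (Fin 2) ℝ)) : Set (Matrix (Fin 2) (Fin 2) ℝ) :=
  {ξ | ∀ f : Matrix (Fin 2) (Fin 2) ℝ → ℝ,
    PolyconvexFun f → (∀ η ∈ E, f η ≤ 0) → f ξ ≤ 0}

/-- The polyconvex hull `U^{pc}` of an open set of 2×2 matrices. -/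
def pcHullOpen (U : Set (Matrix (Fin 2) (Fin 2) ℝ)) : Set (Matrix (Fin 2) (Fin 2) ℝ) :=
  {ξ | ∃ E : Set (Matrix (Fin 2) (Fin 2) ℝ), E ⊆ U ∧ IsCompact E ∧ ξ ∈ pcHull E}

/-- A set of 2×2 matrices is polyconvex. -/
def PolyconvexSet (A : Set (Matrix (Fin 2) (Fin 2) ℝ)) : Prop :=
  ∀ (ξ : Fin 5 → Matrix (Fin 2) (Fin 2) ℝ) (t : Fin 5 → ℝ),
    (∀ i, ξ i ∈ A) → (∀ i, 0 ≤ t i) → (∑ i, t i) = 1 →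
    (∑ i, t i * (ξ i).det) = (∑ i, t i • ξ i).det →
    (∑ i, t i • ξ i) ∈ A

/-- The polyconvex hull `Pco E`: the smallest polyconvex set containing `E`. -/
def Pco (E : Set (Matrix (Fin 2) (Fin 2) ℝ)) : Set (Matrix (Fin 2) (Fin 2) ℝ) :=
  ⋂₀ {A | PolyconvexSet A ∧ E ⊆ A}

/-- A set of 2×2 matrices is isotropic if it is invariant under orthogonal transformations. -/
def Isotropic (E : Set (Matrix (Fin 2) (Fin 2) ℝ)) : Prop :=
  ∀ R S : Matrix (Fin 2) (Fin 2) ℝ, R * R.transpose = 1 → S * S.transpose = 1 → ∀ ξ ∈ E, R * ξ * S ∈ E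

/-- The distance (w.r.t. the Frobenius norm) from a matrix to a set of matrices. -/
noncomputable def distE (ξ : Matrix (Fin 2) (Fin 2) ℝ) (E : Set (Matrix (Fin 2) (Fin 2) ℝ)) : ℝ :=
  sInf ((fun η => frobNorm (ξ - η)) '' E)

/-- The function `f_θ(x,y) = xy + θ(y-x)`. -/
def ftheta (θ : ℝ) (p : ℝ × ℝ) : ℝ := p.1 * p.2 + θ * (p.2 - p.1)

/-- The gradient of a map `u : ℝ² → ℝ²` at `x`, as a 2×2 matrix. -/
noncomputable def gradMatrix (u : (Fin 2 → ℝ) → (Fin 2 → ℝ)) (x : Fin 2 → ℝ) :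
    Matrix (Fin 2) (Fin 2) ℝ :=
  LinearMap.toMatrix' (fderiv ℝ u x).toLinearMap


/-- Lamination hull. -/
inductive Lam (U : Set (Matrix (Fin 2) (Fin 2) ℝ)) : Matrix (Fin 2) (Fin 2) ℝ → Prop
  | base (ξ : Matrix (Fin 2) (Fin 2) ℝ) : ξ ∈ U → Lam U ξ
  | step (ξ η : Matrix (Fin 2) (Fin 2) ℝ) (t : ℝ) : Lam U ξ → Lam U η → 0 ≤ t → t ≤ 1 →
      (ξ - η).det = 0 → Lam U (t • ξ + (1 - t) • η)

lemma rank_one_of_det (A : Matrix (Fin 2) (Fin 2) ℝ) (h0 : A ≠ 0) (hd : A.det = 0) :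
    A.rank = 1 := by
  have h1 : A.rank ≠ 0 := by
    intro h
    apply h0
    unfold Matrix.rank at h
    rw [Submodule.finrank_eq_zero, LinearMap.range_eq_bot] at h
    ext i j
    have := congrFun (LinearMap.congr_fun h (Pi.single j 1)) i
    simpa using this
  have h2 : A.rank ≤ 2 := by
    simpa using A.rank_le_card_width
  have h3 : A.rank ≠ 2 := by
    intro h
    have hu : IsUnit A := by
      rw [← Matrix.mulVec_surjective_iff_isUnit]
      have ht : LinearMap.range A.mulVecLin = ⊤ := by
        apply Submodule.eq_top_of_finrank_eq
        unfold Matrix.rank at h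
        rw [h]
        simp
      exact LinearMap.range_eq_top.1 ht
    rw [Matrix.isUnit_iff_isUnit_det, hd] at hu
    simp at hu
  omega

lemma det_of_rank_one (A : Matrix (Fin 2) (Fin 2) ℝ) (h : A.rank = 1) : A.det = 0 := by
  by_contra hd
  have hu : IsUnit A := by
    rw [Matrix.isUnit_iff_isUnit_det]
    exact isUnit_iff_ne_zero.mpr hd
  have := Matrix.rank_of_isUnit A hu
  simp [h] at this

lemma det_seg (ξ η : Matrix (Fin 2) (Fin 2) ℝ) (t : ℝ) (h : (ξ - η).det = 0) :
    (t • ξ + (1 - t) • η).det = t * ξ.det + (1 - t) * η.det := by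
  simp only [Matrix.det_fin_two, Matrix.sub_apply, Matrix.add_apply, Matrix.smul_apply,
    smul_eq_mul] at *
  linear_combination (-(t * (1 - t))) * h

lemma pcFun_rc (f : Matrix (Fin 2) (Fin 2) ℝ → ℝ) (hf : PolyconvexFun f) : RankOneConvex f := by
  obtain ⟨g, hg, hfg⟩ := hf
  intro ξ η t ht hr
  have hd := det_seg ξ η t (det_of_rank_one _ hr)
  rw [hfg, hfg, hfg, hd]
  have := hg.2 (Set.mem_univ (ξ, ξ.det)) (Set.mem_univ (η, η.det)) ht.1
    (by linarith [ht.2] : (0:ℝ) ≤ 1 - t) (by ring)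
  simpa using this

lemma rc_sub_pc (U : Set (Matrix (Fin 2) (Fin 2) ℝ)) : rcHullOpen U ⊆ pcHullOpen U := by
  rintro ξ ⟨E, hEU, hE, hξ⟩
  exact ⟨E, hEU, hE, fun f hf h => hξ f (pcFun_rc f hf) h⟩

lemma lam_sub_rc (U : Set (Matrix (Fin 2) (Fin 2) ℝ)) (ξ : Matrix (Fin 2) (Fin 2) ℝ)
    (h : Lam U ξ) : ξ ∈ rcHullOpen U := by
  induction h with
  | base ξ hξ =>
    exact ⟨{ξ}, by simpa using hξ, isCompact_singleton, fun f _ h => h ξ rfl⟩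
  | step ξ η t _ _ h0 h1 hd ih1 ih2 =>
    obtain ⟨E, hEU, hE, hξ⟩ := ih1
    obtain ⟨F, hFU, hF, hη⟩ := ih2
    refine ⟨E ∪ F, Set.union_subset hEU hFU, hE.union hF, ?_⟩
    intro f hf hle
    have a1 := hξ f hf (fun x hx => hle x (Or.inl hx))
    have a2 := hη f hf (fun x hx => hle x (Or.inr hx))
    by_cases he : ξ - η = 0
    · have : ξ = η := sub_eq_zero.mp he
      subst this
      rw [← add_smul]
      simpa using a1
    · have := hf ξ η t ⟨h0, h1⟩ (rank_one_of_det _ he hd)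
      nlinarith

lemma lam_sub_Pco (U : Set (Matrix (Fin 2) (Fin 2) ℝ)) (ξ : Matrix (Fin 2) (Fin 2) ℝ)
    (h : Lam U ξ) : ξ ∈ Pco U := by
  intro A hA
  obtain ⟨hA, hUA⟩ := hA
  induction h with
  | base ξ hξ => exact hUA hξ
  | step ξ η t _ _ h0 h1 hd ih1 ih2 =>
    have := hA ![ξ, η, η, η, η] ![t, 1 - t, 0, 0, 0]
      (by intro i; fin_cases i <;> simp [ih1, ih2])
      (by intro i; fin_cases i <;> simp [h0, h1])
      (by simp [Fin.sum_univ_five])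
      (by
        have := det_seg ξ η t hd
        simp [Fin.sum_univ_five, this])
    simpa [Fin.sum_univ_five] using this

lemma Pco_sub_pc (U : Set (Matrix (Fin 2) (Fin 2) ℝ)) : Pco U ⊆ pcHullOpen U := by
  apply Set.sInter_subset_of_mem
  constructor
  · intro ξ t hξ ht hs hd
    choose E hEU hE hξE using hξ
    refine ⟨⋃ i, E i, Set.iUnion_subset hEU, isCompact_iUnion hE, ?_⟩
    intro f hf hle
    have h1 : ∀ i, f (ξ i) ≤ 0 := fun i => hξE i f hf
      (fun x hx => hle x (Set.mem_iUnion.mpr ⟨i, hx⟩))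
    obtain ⟨g, hg, hfg⟩ := hf
    have := hg.map_sum_le (t := Finset.univ) (w := t) (p := fun i => (ξ i, (ξ i).det))
      (fun i _ => ht i) hs (fun i _ => Set.mem_univ _)
    have e : (∑ i, t i • ((ξ i, (ξ i).det) : Matrix (Fin 2) (Fin 2) ℝ × ℝ))
        = (∑ i, t i • ξ i, (∑ i, t i • ξ i).det) := by
      rw [← hd]
      ext1
      · simp [Prod.fst_sum]
      · simp [Prod.snd_sum]
    rw [e] at this
    rw [hfg]
    refine this.trans ?_
    apply Finset.sum_nonpos
    intro i _
    have := h1 i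
    rw [hfg] at this
    exact mul_nonpos_of_nonneg_of_nonpos (ht i) this
  · intro ξ hξ
    exact ⟨{ξ}, by simpa using hξ, isCompact_singleton, fun f _ h => h ξ rfl⟩

lemma lam_iso (U : Set (Matrix (Fin 2) (Fin 2) ℝ)) (hU : Isotropic U)
    (R S : Matrix (Fin 2) (Fin 2) ℝ) (hR : R * R.transpose = 1) (hS : S * S.transpose = 1)
    (ξ : Matrix (Fin 2) (Fin 2) ℝ) (h : Lam U ξ) : Lam U (R * ξ * S) := by
  induction h with
  | base ξ hξ => exact Lam.base _ (hU R S hR hS ξ hξ)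
  | step ξ η t _ _ h0 h1 hd ih1 ih2 =>
    have := Lam.step _ _ t ih1 ih2 h0 h1 (by
      rw [← Matrix.sub_mul, ← Matrix.mul_sub, Matrix.det_mul, Matrix.det_mul, hd]; simp)
    convert this using 1
    simp [Matrix.mul_add, Matrix.add_mul]

/-- conformal part -/
noncomputable def zc : Matrix (Fin 2) (Fin 2) ℝ →ₗ[ℝ] ℂ where
  toFun ξ := ⟨(ξ 0 0 + ξ 1 1) / 2, (ξ 1 0 - ξ 0 1) / 2⟩
  map_add' a b := by apply Complex.ext <;> simp <;> ring
  map_smul' a b := by apply Complex.ext <;> simp <;> ring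

/-- anticonformal part -/
noncomputable def wc : Matrix (Fin 2) (Fin 2) ℝ →ₗ[ℝ] ℂ where
  toFun ξ := ⟨(ξ 0 0 - ξ 1 1) / 2, (ξ 1 0 + ξ 0 1) / 2⟩
  map_add' a b := by apply Complex.ext <;> simp <;> ring
  map_smul' a b := by apply Complex.ext <;> simp <;> ring

/-- rotation -/
noncomputable def rot (a : ℝ) : Matrix (Fin 2) (Fin 2) ℝ :=
  !![Real.cos a, -Real.sin a; Real.sin a, Real.cos a]

lemma rot_orth (a : ℝ) : rot a * (rot a).transpose = 1 := by
  have := Real.sin_sq_add_cos_sq a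
  ext i j
  fin_cases i <;> fin_cases j <;> simp [rot, Matrix.mul_apply, Fin.sum_univ_two] <;>
    nlinarith

lemma rot_decomp (ξ : Matrix (Fin 2) (Fin 2) ℝ) : ∃ σ τ : ℝ,
    ξ = rot σ * !![‖zc ξ‖ + ‖wc ξ‖, 0; 0, ‖zc ξ‖ - ‖wc ξ‖] * rot τ := by
  set α := (zc ξ).arg with hα
  set β := (wc ξ).arg with hβ
  have a1 : ‖zc ξ‖ * Real.cos α = (ξ 0 0 + ξ 1 1) / 2 := Complex.norm_mul_cos_arg (zc ξ)
  have a2 : ‖zc ξ‖ * Real.sin α = (ξ 1 0 - ξ 0 1) / 2 := Complex.norm_mul_sin_arg (zc ξ)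
  have b1 : ‖wc ξ‖ * Real.cos β = (ξ 0 0 - ξ 1 1) / 2 := Complex.norm_mul_cos_arg (wc ξ)
  have b2 : ‖wc ξ‖ * Real.sin β = (ξ 1 0 + ξ 0 1) / 2 := Complex.norm_mul_sin_arg (wc ξ)
  refine ⟨(α + β) / 2, (α - β) / 2, ?_⟩
  have e1 : α = (α + β) / 2 + (α - β) / 2 := by ring
  have e2 : β = (α + β) / 2 - (α - β) / 2 := by ring
  rw [e1] at a1 a2
  rw [e2] at b1 b2
  rw [Real.cos_add] at a1
  rw [Real.sin_add] at a2
  rw [Real.cos_sub] at b1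
  rw [Real.sin_sub] at b2
  ext i j
  fin_cases i <;> fin_cases j <;> simp [rot, Matrix.mul_apply, Fin.sum_univ_two] <;>
    linarith

lemma rot_inv1 (a : ℝ) : rot (-a) * rot a = 1 := by
  have := Real.sin_sq_add_cos_sq a
  ext i j
  fin_cases i <;> fin_cases j <;> simp [rot, Matrix.mul_apply, Fin.sum_univ_two] <;>
    nlinarith

lemma rot_inv2 (a : ℝ) : rot a * rot (-a) = 1 := by
  have := rot_inv1 (-a)
  simpa using this

/-- membership of the diagonal matrix -/
def QQ (U : Set (Matrix (Fin 2) (Fin 2) ℝ)) (x y : ℝ) : Prop := Lam U !![x, 0; 0, y]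

lemma QQ_neg {U : Set (Matrix (Fin 2) (Fin 2) ℝ)} (hU : Isotropic U)
    {x y : ℝ} (h : QQ U x y) : QQ U x (-y) := by
  have := lam_iso U hU 1 !![1, 0; 0, -1] (by simp)
    (by ext i j; fin_cases i <;> fin_cases j <;> simp [Matrix.mul_apply, Fin.sum_univ_two]) _ h
  unfold QQ
  convert this using 1
  ext i j; fin_cases i <;> fin_cases j <;> simp [Matrix.mul_apply, Fin.sum_univ_two]

lemma QQ_swap {U : Set (Matrix (Fin 2) (Fin 2) ℝ)} (hU : Isotropic U)
    {x y : ℝ} (h : QQ U x y) : QQ U y x := by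
  have := lam_iso U hU !![0, 1; 1, 0] !![0, 1; 1, 0]
    (by ext i j; fin_cases i <;> fin_cases j <;> simp [Matrix.mul_apply, Fin.sum_univ_two])
    (by ext i j; fin_cases i <;> fin_cases j <;> simp [Matrix.mul_apply, Fin.sum_univ_two]) _ h
  unfold QQ
  convert this using 1
  ext i j; fin_cases i <;> fin_cases j <;> simp [Matrix.mul_apply, Fin.sum_univ_two]

lemma lam_iff {U : Set (Matrix (Fin 2) (Fin 2) ℝ)} (hU : Isotropic U)
    (ξ : Matrix (Fin 2) (Fin 2) ℝ) :
    Lam U ξ ↔ QQ U (‖zc ξ‖ + ‖wc ξ‖) (‖zc ξ‖ - ‖wc ξ‖) := by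
  obtain ⟨σ, τ, h⟩ := rot_decomp ξ
  constructor
  · intro hl
    have := lam_iso U hU (rot (-σ)) (rot (-τ)) (rot_orth _) (rot_orth _) ξ hl
    unfold QQ
    convert this using 1
    conv_rhs => rw [h]
    simp only [← Matrix.mul_assoc]
    rw [rot_inv1, Matrix.one_mul, Matrix.mul_assoc, rot_inv2, Matrix.mul_one]
  · intro hl
    have := lam_iso U hU (rot σ) (rot τ) (rot_orth _) (rot_orth _) _ hl
    rwa [← h] at this

lemma QQ_abs {U : Set (Matrix (Fin 2) (Fin 2) ℝ)} (hU : Isotropic U)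
    {x y : ℝ} : QQ U y |x| ↔ QQ U y x := by
  rcases abs_choice x with h | h
  · rw [h]
  · rw [h]
    exact ⟨fun h => by simpa using QQ_neg hU h, QQ_neg hU⟩

lemma lam_iff' {U : Set (Matrix (Fin 2) (Fin 2) ℝ)} (hU : Isotropic U)
    (ξ : Matrix (Fin 2) (Fin 2) ℝ) :
    Lam U ξ ↔ QQ U |‖zc ξ‖ - ‖wc ξ‖| (‖zc ξ‖ + ‖wc ξ‖) := by
  rw [lam_iff hU]
  constructor
  · intro h
    exact QQ_swap hU ((QQ_abs hU).2 h)
  · intro h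
    exact (QQ_abs hU).1 (QQ_swap hU h)

lemma lam_N {U : Set (Matrix (Fin 2) (Fin 2) ℝ)} (hU : Isotropic U)
    (x y θ k : ℝ) (hxy : 0 ≤ x + y) (hk : k ^ 2 = x * y + θ * (y - x) - θ ^ 2) :
    Lam U !![y - x - θ, -k; k, -θ] ↔ QQ U x y := by
  rw [lam_iff hU]
  have h1 : ‖zc !![y - x - θ, -k; k, -θ]‖ = (x + y) / 2 := by
    have : ‖zc !![y - x - θ, -k; k, -θ]‖ ^ 2 = ((x + y) / 2) ^ 2 := by
      rw [Complex.sq_norm, Complex.normSq_apply]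
      simp [zc]
      linear_combination hk
    exact (sq_eq_sq₀ (norm_nonneg _) (by linarith)).1 this
  have h2 : ‖wc !![y - x - θ, -k; k, -θ]‖ = |(y - x) / 2| := by
    have : ‖wc !![y - x - θ, -k; k, -θ]‖ ^ 2 = |(y - x) / 2| ^ 2 := by
      rw [Complex.sq_norm, Complex.normSq_apply, sq_abs]
      simp [wc]
      ring
    exact (sq_eq_sq₀ (norm_nonneg _) (abs_nonneg _)).1 this
  rw [h1, h2]
  rcases abs_choice ((y - x) / 2) with h | h <;> rw [h]
  · have e1 : (x + y) / 2 + (y - x) / 2 = y := by ring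
    have e2 : (x + y) / 2 - (y - x) / 2 = x := by ring
    rw [e1, e2]
    exact ⟨QQ_swap hU, QQ_swap hU⟩
  · have e1 : (x + y) / 2 + -((y - x) / 2) = x := by ring
    have e2 : (x + y) / 2 - -((y - x) / 2) = y := by ring
    rw [e1, e2]

lemma lam_line {U : Set (Matrix (Fin 2) (Fin 2) ℝ)}
    {m₁ m₂ m b c d : ℝ} (h1 : Lam U !![m₁, b; c, d]) (h2 : Lam U !![m₂, b; c, d])
    (hm1 : m₁ ≤ m) (hm2 : m ≤ m₂) : Lam U !![m, b; c, d] := by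
  rcases eq_or_lt_of_le (hm1.trans hm2) with h | h
  · have : m = m₁ := by linarith
    rwa [this]
  · have hp : 0 < m₂ - m₁ := by linarith
    have := Lam.step _ _ ((m - m₁) / (m₂ - m₁)) h2 h1 (div_nonneg (by linarith) hp.le)
      ((div_le_one hp).2 (by linarith)) (by simp [Matrix.det_fin_two])
    convert this using 1
    ext i j; fin_cases i <;> fin_cases j <;> simp
    all_goals field_simp
    all_goals ring

lemma QQ_key {U : Set (Matrix (Fin 2) (Fin 2) ℝ)} (hU : Isotropic U)
    {x₁ y₁ x₂ y₂ x y θ c : ℝ} (h1 : QQ U x₁ y₁) (h2 : QQ U x₂ y₂)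
    (p1 : 0 ≤ x₁ + y₁) (p2 : 0 ≤ x₂ + y₂) (p : 0 ≤ x + y)
    (c1 : x₁ * y₁ + θ * (y₁ - x₁) = c) (c2 : x₂ * y₂ + θ * (y₂ - x₂) = c)
    (cc : x * y + θ * (y - x) = c) (hc : θ ^ 2 ≤ c)
    (d1 : y₁ - x₁ ≤ y - x) (d2 : y - x ≤ y₂ - x₂) : QQ U x y := by
  have hk : (Real.sqrt (c - θ ^ 2)) ^ 2 = c - θ ^ 2 := Real.sq_sqrt (by linarith)
  set k := Real.sqrt (c - θ ^ 2)
  rw [← lam_N hU x₁ y₁ θ k p1 (by rw [hk, c1])] at h1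
  rw [← lam_N hU x₂ y₂ θ k p2 (by rw [hk, c2])] at h2
  rw [← lam_N hU x y θ k p (by rw [hk, cc])]
  exact lam_line h1 h2 (by linarith) (by linarith)

lemma QQ_box1 {U : Set (Matrix (Fin 2) (Fin 2) ℝ)} (hU : Isotropic U)
    {a b x : ℝ} (h : QQ U a b) (hx : 0 ≤ x) (hxa : x ≤ a) : QQ U x b := by
  have h' : QQ U (-a) b := QQ_swap hU (QQ_neg hU (QQ_swap hU h))
  exact lam_line h' h (by linarith) hxa

lemma QQ_box {U : Set (Matrix (Fin 2) (Fin 2) ℝ)} (hU : Isotropic U)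
    {a b x y : ℝ} (h : QQ U a b) (hx : 0 ≤ x) (hxa : x ≤ a) (hy : 0 ≤ y)
    (hyb : y ≤ b) : QQ U x y :=
  QQ_swap hU (QQ_box1 hU (QQ_swap hU (QQ_box1 hU h hx hxa)) hy hyb)

lemma QQ_hull {U : Set (Matrix (Fin 2) (Fin 2) ℝ)} (hU : Isotropic U)
    {a b x y : ℝ} (h : QQ U a b) (ha : 0 ≤ a) (hab : a ≤ b) (hx : 0 ≤ x)
    (hxy : x ≤ y) (hyb : y ≤ b) (hd : x * y ≤ a * b) : QQ U x y := by
  rcases eq_or_lt_of_le (hx.trans hxy) with h0 | h0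
  · exact QQ_box hU h hx (by linarith) (by linarith) hyb
  · have h' := QQ_swap hU h
    by_cases hc : a * b ≤ y ^ 2
    · have hx0 : a * b / y * y = a * b := by field_simp
      set x0 := a * b / y with hx0d
      have g1 : a ≤ x0 := by rw [hx0d, le_div_iff₀ h0]; nlinarith
      have g2 : x0 ≤ y := by rw [hx0d, div_le_iff₀ h0]; nlinarith
      have g3 : x ≤ x0 := by rw [hx0d, le_div_iff₀ h0]; exact hd
      have : QQ U x0 y := QQ_key hU (θ := 0) (c := a * b) h' h (by linarith) (by linarith)
        (by linarith) (by ring) (by ring) (by linarith) (by nlinarith) (by linarith)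
        (by linarith)
      exact QQ_box1 hU this hx g3
    · have hs : Real.sqrt (a * b) ^ 2 = a * b := Real.sq_sqrt (by nlinarith)
      have hs0 := Real.sqrt_nonneg (a * b)
      set g := Real.sqrt (a * b)
      have hyg : y ≤ g := by nlinarith
      have : QQ U g g := QQ_key hU (θ := 0) (c := a * b) h' h (by linarith) (by linarith)
        (by linarith) (by ring) (by ring) (by linarith) (by nlinarith) (by linarith)
        (by linarith)
      exact QQ_box hU this hx (by linarith) h0.le hyg

lemma QQ_final {U : Set (Matrix (Fin 2) (Fin 2) ℝ)} (hU : Isotropic U)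
    {a₁ a₂ b₁ b₂ p q θ : ℝ} (ha : QQ U a₁ a₂) (hb : QQ U b₁ b₂)
    (ha0 : 0 ≤ a₁) (hb0 : 0 ≤ b₁) (hb12 : b₁ ≤ b₂)
    (hp : 0 ≤ p) (hpq : p ≤ q) (hθ : 0 ≤ θ) (hθq : θ ≤ q)
    (haq : q ≤ a₂) (hbq : b₂ ≤ q) (hbp : p ≤ b₁)
    (fa : p * q + θ * (q - p) ≤ a₁ * a₂ + θ * (a₂ - a₁))
    (fb : p * q + θ * (q - p) ≤ b₁ * b₂ + θ * (b₂ - b₁)) : QQ U p q := by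
  have hc : θ ^ 2 ≤ p * q + θ * (q - p) := by nlinarith [mul_nonneg (add_nonneg hp hθ) (sub_nonneg.2 hθq)]
  obtain ⟨x₂, y₂, h2, p2, c2, d2⟩ : ∃ x y, QQ U x y ∧ 0 ≤ x + y ∧
      x * y + θ * (y - x) = p * q + θ * (q - p) ∧ q - p ≤ y - x := by
    by_cases h : θ * a₂ ≤ p * q + θ * (q - p)
    · rcases eq_or_lt_of_le (hθq.trans haq) with e | e
      · have : q = θ := by linarith
        subst this
        refine ⟨0, a₂, QQ_box1 hU ha le_rfl ha0, by linarith, ?_, by linarith⟩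
        rw [← e]; ring
      · have hpos : 0 < a₂ - θ := by linarith
        have hx : (p * q + θ * (q - p) - θ * a₂) / (a₂ - θ) * (a₂ - θ)
          = p * q + θ * (q - p) - θ * a₂ := by field_simp
        set x := (p * q + θ * (q - p) - θ * a₂) / (a₂ - θ) with hxd
        have x0 : 0 ≤ x := div_nonneg (by linarith) hpos.le
        have x1 : x ≤ a₁ := by rw [hxd, div_le_iff₀ hpos]; nlinarith
        have x2 : x ≤ p := by rw [hxd, div_le_iff₀ hpos]; nlinarith
        exact ⟨x, a₂, QQ_box1 hU ha x0 x1, by linarith, by linarith, by linarith⟩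
    · push Not at h
      have hθ0 : 0 < θ := by
        rcases eq_or_lt_of_le hθ with e | e
        · rw [← e] at h; nlinarith
        · exact e
      have hy : θ * ((p * q + θ * (q - p)) / θ) = p * q + θ * (q - p) := by field_simp
      set y := (p * q + θ * (q - p)) / θ with hyd
      have y1 : q - p ≤ y := by rw [hyd, le_div_iff₀ hθ0]; nlinarith
      have y2 : y ≤ a₂ := by rw [hyd, div_le_iff₀ hθ0]; nlinarith
      exact ⟨0, y, QQ_box hU ha le_rfl ha0 (by linarith) y2, by linarith, by linarith,
        by linarith⟩
  have hb2 : θ ≤ b₂ := by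
    by_contra hlt
    push Not at hlt
    nlinarith [mul_pos (by linarith : 0 < b₁ + θ) (sub_pos.2 hlt)]
  rcases eq_or_lt_of_le hb2 with e | e
  · have h0 : (p + θ) * (q - θ) = 0 := by
      apply le_antisymm
      · subst e; nlinarith
      · exact mul_nonneg (by linarith) (by linarith)
    rcases mul_eq_zero.1 h0 with h0 | h0
    · have e1 : p = 0 := by linarith
      have e2 : θ = 0 := by linarith
      have e3 : b₁ = 0 := by linarith
      refine QQ_key hU hb h2 (by linarith) p2 (by linarith) ?_ c2 rfl hc (by linarith) d2
      rw [← e, e1, e2, e3]; ring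
    · have : q = b₂ := by linarith
      rw [this]
      exact QQ_box1 hU hb hp hbp
  · have hpos : 0 < b₂ - θ := by linarith
    have hx : (p * q + θ * (q - p) - θ * b₂) / (b₂ - θ) * (b₂ - θ)
      = p * q + θ * (q - p) - θ * b₂ := by field_simp
    set x := (p * q + θ * (q - p) - θ * b₂) / (b₂ - θ) with hxd
    have x1 : x ≤ b₁ := by rw [hxd, div_le_iff₀ hpos]; nlinarith
    have x2 : p ≤ x := by rw [hxd, le_div_iff₀ hpos]; nlinarith
    exact QQ_key hU (QQ_box1 hU hb (by linarith) x1) h2 (by linarith) p2 (by linarith)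
      (by linarith) c2 rfl hc (by linarith) d2

/-- The separating polyconvex function. -/
noncomputable def gt (θ : ℝ) (ξ : Matrix (Fin 2) (Fin 2) ℝ) : ℝ :=
  max (ξ.det + 2 * θ * ‖wc ξ‖) (-ξ.det + 2 * θ * ‖zc ξ‖)

lemma det_eq (ξ : Matrix (Fin 2) (Fin 2) ℝ) : ξ.det = ‖zc ξ‖ ^ 2 - ‖wc ξ‖ ^ 2 := by
  rw [Complex.sq_norm, Complex.sq_norm, Complex.normSq_apply, Complex.normSq_apply,
    Matrix.det_fin_two]
  simp [zc, wc]
  ring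

lemma cont_z : Continuous (fun ξ : Matrix (Fin 2) (Fin 2) ℝ => ‖zc ξ‖) :=
  (LinearMap.continuous_of_finiteDimensional zc).norm

lemma cont_w : Continuous (fun ξ : Matrix (Fin 2) (Fin 2) ℝ => ‖wc ξ‖) :=
  (LinearMap.continuous_of_finiteDimensional wc).norm

lemma gt_cont (θ : ℝ) : Continuous (gt θ) := by
  have h1 := cont_z
  have h2 := cont_w
  have h3 : Continuous (fun ξ : Matrix (Fin 2) (Fin 2) ℝ => ξ.det) := by fun_prop
  unfold gt
  fun_prop

lemma gt_pc (θ d : ℝ) (hθ : 0 ≤ θ) : PolyconvexFun (fun ξ => gt θ ξ - d) := by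
  refine ⟨fun X => max (X.2 + 2 * θ * ‖wc X.1‖) (-X.2 + 2 * θ * ‖zc X.1‖) - d, ?_,
    fun ξ => rfl⟩
  have hn : ∀ l : Matrix (Fin 2) (Fin 2) ℝ →ₗ[ℝ] ℂ,
      ConvexOn ℝ Set.univ (fun X : Matrix (Fin 2) (Fin 2) ℝ × ℝ => 2 * θ * ‖l X.1‖) := by
    intro l
    have h := (convexOn_univ_norm (E := ℂ)).comp_linearMap
      (l.comp (LinearMap.fst ℝ (Matrix (Fin 2) (Fin 2) ℝ) ℝ))
    exact h.smul (by linarith : (0:ℝ) ≤ 2 * θ)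
  have hs : ConvexOn ℝ Set.univ (fun X : Matrix (Fin 2) (Fin 2) ℝ × ℝ => X.2) :=
    (LinearMap.snd ℝ (Matrix (Fin 2) (Fin 2) ℝ) ℝ).convexOn convex_univ
  have hs' : ConvexOn ℝ Set.univ (fun X : Matrix (Fin 2) (Fin 2) ℝ × ℝ => -X.2) :=
    (-(LinearMap.snd ℝ (Matrix (Fin 2) (Fin 2) ℝ) ℝ)).convexOn convex_univ
  have := ((hs.add (hn wc)).sup (hs'.add (hn zc))).add_const (-d)
  exact this

/-- small singular value -/
noncomputable def sx (ξ : Matrix (Fin 2) (Fin 2) ℝ) : ℝ := |‖zc ξ‖ - ‖wc ξ‖|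
/-- large singular value -/
noncomputable def sy (ξ : Matrix (Fin 2) (Fin 2) ℝ) : ℝ := ‖zc ξ‖ + ‖wc ξ‖

lemma sx_nonneg (ξ : Matrix (Fin 2) (Fin 2) ℝ) : 0 ≤ sx ξ := abs_nonneg _
lemma sx_le (ξ : Matrix (Fin 2) (Fin 2) ℝ) : sx ξ ≤ sy ξ := by
  unfold sx sy
  have := norm_nonneg (zc ξ)
  have := norm_nonneg (wc ξ)
  rw [abs_le]; constructor <;> linarith

lemma gt_ge (θ : ℝ) (ξ : Matrix (Fin 2) (Fin 2) ℝ) :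
    sx ξ * sy ξ + θ * (sy ξ - sx ξ) ≤ gt θ ξ := by
  unfold gt
  rw [det_eq]
  unfold sx sy
  rcases abs_choice (‖zc ξ‖ - ‖wc ξ‖) with h | h <;> rw [h]
  · apply le_max_of_le_left; apply le_of_eq; ring
  · apply le_max_of_le_right; apply le_of_eq; ring

lemma gt_le (θ : ℝ) (hθ : 0 ≤ θ) (ξ : Matrix (Fin 2) (Fin 2) ℝ) (h : θ ^ 2 ≤ gt θ ξ) :
    gt θ ξ ≤ sx ξ * sy ξ + θ * (sy ξ - sx ξ) := by
  have e : gt θ ξ = max (sx ξ * sy ξ + θ * (sy ξ - sx ξ)) (-(sx ξ * sy ξ) + θ * (sy ξ + sx ξ)) := by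
    unfold gt
    rw [det_eq]
    unfold sx sy
    rcases abs_choice (‖zc ξ‖ - ‖wc ξ‖) with h | h <;> rw [h]
    · congr 1 <;> ring
    · rw [max_comm]; congr 1 <;> ring
  have h0 := sx_nonneg ξ
  have h1 := sx_le ξ
  rw [e] at h ⊢
  apply max_le le_rfl
  rcases le_or_gt θ (sy ξ) with hy | hy
  · nlinarith
  · exfalso
    rcases le_max_iff.1 h with h | h
    · nlinarith [mul_pos (by linarith : 0 < sx ξ + θ) (sub_pos.2 hy)]
    · nlinarith [mul_pos (by linarith : 0 < θ - sx ξ) (sub_pos.2 hy)]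

lemma pc_sub_lam (U : Set (Matrix (Fin 2) (Fin 2) ℝ)) (hU : Isotropic U)
    (ξ : Matrix (Fin 2) (Fin 2) ℝ) (h : ξ ∈ pcHullOpen U) : Lam U ξ := by
  obtain ⟨E, hEU, hE, hξ⟩ := h
  rw [lam_iff' hU]
  change QQ U (sx ξ) (sy ξ)
  have hEQ : ∀ η ∈ E, QQ U (sx η) (sy η) := fun η hη => (lam_iff' hU η).1 (Lam.base η (hEU hη))
  have hne : E.Nonempty := by
    by_contra hemp
    rw [Set.not_nonempty_iff_eq_empty] at hemp
    have := hξ (fun _ => 1) ⟨fun _ => 1, convexOn_const 1 convex_univ, fun _ => rfl⟩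
      (by simp [hemp])
    linarith
  have hp := sx_nonneg ξ
  have hpq := sx_le ξ
  have hex : ∀ θ, 0 ≤ θ → θ ≤ sy ξ → ∃ η ∈ E,
      sx ξ * sy ξ + θ * (sy ξ - sx ξ) ≤ sx η * sy η + θ * (sy η - sx η) := by
    intro θ h0 h1
    obtain ⟨η, hη, hmax⟩ := hE.exists_isMaxOn hne (gt_cont θ).continuousOn
    have h2 := hξ _ (gt_pc θ (gt θ η) h0) (fun x hx => by
      have := hmax hx
      simp only [Set.mem_ofPred_eq] at this
      linarith)
    have h3 := gt_ge θ ξ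
    have h4 : θ ^ 2 ≤ sx ξ * sy ξ + θ * (sy ξ - sx ξ) := by
      nlinarith [mul_nonneg (add_nonneg hp h0) (sub_nonneg.2 h1)]
    have h5 := gt_le θ h0 η (by linarith)
    exact ⟨η, hη, by linarith⟩
  set p := sx ξ
  set q := sy ξ
  by_contra hnot
  have cx : Continuous sx := (cont_z.sub cont_w).abs
  have cy : Continuous sy := cont_z.add cont_w
  let K : Set (ℝ × Matrix (Fin 2) (Fin 2) ℝ) := Set.Icc 0 q ×ˢ E
  have hK : IsCompact K := isCompact_Icc.prod hE
  let C : Set (ℝ × Matrix (Fin 2) (Fin 2) ℝ) :=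
    {X | p * q + X.1 * (q - p) ≤ sx X.2 * sy X.2 + X.1 * (sy X.2 - sx X.2)}
  have hC : IsClosed C := isClosed_le (by fun_prop) (by fun_prop)
  let CA : Set (ℝ × Matrix (Fin 2) (Fin 2) ℝ) := {X | q ≤ sy X.2}
  have hCA : IsClosed CA := isClosed_le (by fun_prop) (by fun_prop)
  let CB : Set (ℝ × Matrix (Fin 2) (Fin 2) ℝ) := {X | sy X.2 ≤ q} ∩ {X | p ≤ sx X.2}
  have hCB : IsClosed CB :=
    (isClosed_le (by fun_prop) (by fun_prop)).inter (isClosed_le (by fun_prop) (by fun_prop))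
  let A : Set ℝ := Prod.fst '' (K ∩ (C ∩ CA))
  let B : Set ℝ := Prod.fst '' (K ∩ (C ∩ CB))
  have hA : IsClosed A := ((hK.inter_right (hC.inter hCA)).image continuous_fst).isClosed
  have hB : IsClosed B := ((hK.inter_right (hC.inter hCB)).image continuous_fst).isClosed
  have hcov : Set.Icc 0 q ⊆ A ∪ B := by
    intro θ hθ
    obtain ⟨η, hη, hf⟩ := hex θ hθ.1 hθ.2
    rcases le_or_gt q (sy η) with hy | hy
    · exact Or.inl ⟨(θ, η), ⟨⟨hθ, hη⟩, hf, hy⟩, rfl⟩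
    · refine Or.inr ⟨(θ, η), ⟨⟨hθ, hη⟩, hf, hy.le, ?_⟩, rfl⟩
      by_contra hx
      simp only [Set.mem_ofPred_eq, not_le] at hx
      have k1 := sx_nonneg η
      have k2 : (p + θ) * (q - θ) ≤ (sx η + θ) * (sy η - θ) := by nlinarith
      have k3 : (sx η + θ) * (sy η - θ) ≤ (sx η + θ) * (q - θ) :=
        mul_le_mul_of_nonneg_left (by linarith) (by linarith [hθ.1])
      have hqθ : q = θ := by
        rcases eq_or_lt_of_le hθ.2 with e | e
        · exact e.symm
        · nlinarith
      have := hθ.1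
      nlinarith [mul_nonneg k1 this]
  have hq0 : 0 ≤ q := hp.trans hpq
  have h0B : (0:ℝ) ∈ B := by
    rcases hcov ⟨le_rfl, hq0⟩ with h | h
    · exfalso
      obtain ⟨⟨θ, η⟩, ⟨⟨hθ, hη⟩, hf, hy⟩, e⟩ := h
      simp only at e
      subst e
      have hf' : p * q + 0 * (q - p) ≤ sx η * sy η + 0 * (sy η - sx η) := hf
      exact hnot (QQ_hull hU (hEQ η hη) (sx_nonneg η) (sx_le η) hp hpq hy (by linarith))
    · exact h
  have hqA : q ∈ A := by
    rcases hcov ⟨hq0, le_rfl⟩ with h | h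
    · exact h
    · obtain ⟨⟨θ, η⟩, ⟨⟨hθ, hη⟩, hf, hy, hx⟩, e⟩ := h
      simp only at e
      subst e
      refine ⟨(q, η), ⟨⟨hθ, hη⟩, hf, ?_⟩, rfl⟩
      have hf' : p * q + q * (q - p) ≤ sx η * sy η + q * (sy η - sx η) := hf
      change q ≤ sy η
      have k1 := sx_nonneg η
      have k2 := sx_le η
      by_contra hlt
      push Not at hlt
      nlinarith [mul_pos (by linarith : 0 < sx η + q) (sub_pos.2 hlt)]
  have hcon := isPreconnected_closed_iff.1 (isPreconnected_Icc (a := (0:ℝ)) (b := q)) A B hA hB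
    hcov ⟨q, ⟨hq0, le_rfl⟩, hqA⟩ ⟨0, ⟨le_rfl, hq0⟩, h0B⟩
  obtain ⟨θ, hθ, hθA, hθB⟩ := hcon
  obtain ⟨⟨θ₁, a⟩, ⟨⟨_, ha⟩, fa, ya⟩, e1⟩ := hθA
  obtain ⟨⟨θ₂, b⟩, ⟨⟨_, hb⟩, fb, yb, xb⟩, e2⟩ := hθB
  simp only at e1 e2
  subst e1 e2
  exact hnot (QQ_final hU (hEQ a ha) (hEQ b hb) (sx_nonneg a) (sx_nonneg b) (sx_le b) hp hpq
    hθ.1 hθ.2 ya yb xb fa fb)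

/-- for an open isotropic bounded subset `U` of ℝ^{2×2},
`U^{rc} = U^{pc} = Pco U`. -/
theorem open_rcHull_eq_pcHull_eq_Pco (U : Set (Matrix (Fin 2) (Fin 2) ℝ))
    (hUo : IsOpen U) (hUiso : Isotropic U) (hUb : ∃ M : ℝ, ∀ ξ ∈ U, ∀ i j, |ξ i j| ≤ M) :
    rcHullOpen U = pcHullOpen U ∧ pcHullOpen U = Pco U := by
  constructor
  · exact (rc_sub_pc U).antisymm (fun ξ h => lam_sub_rc U ξ (pc_sub_lam U hUiso ξ h))
  · exact Set.Subset.antisymm (fun ξ h => lam_sub_Pco U ξ (pc_sub_lam U hUiso ξ h))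
      (Pco_sub_pc U)
end

section
/- Let K ⊂ {(x,y) ∈ ℝ² : 0 < x ≤ y} be a compact set and let E := {ξ ∈ ℝ^{2×2} : (λ₁(ξ), λ₂(ξ)) ∈ K}. Then E^{pc} = { ξ ∈ ℝ^{2×2} : f_θ(λ₁(ξ), λ₂(ξ)) ≤ max_{(a,b) ∈ K} f_θ(a,b) for all θ ∈ [0, max_{(a,b) ∈ K} b] }. -/
open scoped BigOperators

/-- Auxiliary: the key two-dimensional inequality, main branch. -/
lemma aux_key (t s B x y a b θ : ℝ) (hB : |s| ≤ B) (hx : 0 < x) (hxy : x ≤ y)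
    (hpos : 0 < t * y + s) (hb : 0 < a)
    (hθ : θ = (y * B - s * x) / (t * (x + y) + B + s)) (hD : 0 < t * (x + y) + B + s)
    (hθ0 : 0 ≤ θ)
    (hts : θ ≤ b → 0 ≤ t * b + s)
    (hf : x * y + θ * (y - x) ≤ a * b + θ * (b - a)) :
    t * x * y + B * y + s * x ≤ t * a * b + B * b + s * a := by
  obtain ⟨h1, h2⟩ := abs_le.mp hB
  have hDθ : θ * (t * (x + y) + B + s) = y * B - s * x := by
    rw [hθ]; field_simp
  have hyθ : 0 < y - θ := by
    have : 0 < (y - θ) * (t * (x + y) + B + s) := by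
      have : (y - θ) * (t * (x + y) + B + s) = (x + y) * (t * y + s) := by linear_combination -hDθ
      rw [this]; apply mul_pos <;> linarith
    exact pos_of_mul_pos_left this hD.le
  have hbθ : 0 < b - θ := by
    have h3 : 0 < (y - θ) * (x + θ) := mul_pos hyθ (by linarith)
    have : 0 < (b - θ) * (a + θ) := by nlinarith
    exact pos_of_mul_pos_left this (by linarith)
  have hBt : 0 ≤ B - t * θ := by
    rcases le_total t 0 with ht | ht
    · nlinarith
    · have : 0 ≤ (B - t * θ) * (t * (x + y) + B + s) := by
        have : (B - t * θ) * (t * (x + y) + B + s) = (B + s) * (B + t * x) := by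
          linear_combination -t * hDθ
        rw [this]
        have := mul_nonneg ht hx.le
        apply mul_nonneg <;> linarith
      exact nonneg_of_mul_nonneg_left this hD
  have h4 := hts (by linarith)
  have key : (b - θ) * ((t * a * b + B * b + s * a) - (t * x * y + B * y + s * x)) =
      (t * b + s) * ((a * b + θ * (b - a)) - (x * y + θ * (y - x))) + (B - t * θ) * (b - y) ^ 2 := by
    linear_combination (y - b) * hDθ
  have h5 : 0 ≤ (b - θ) * ((t * a * b + B * b + s * a) - (t * x * y + B * y + s * x)) := by
    rw [key]
    have := mul_nonneg h4 (sub_nonneg.mpr hf)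
    have := mul_nonneg hBt (sq_nonneg (b - y))
    linarith
  have := nonneg_of_mul_nonneg_right h5 hbθ
  linarith

/-- Auxiliary: the case where the coefficient is nonnegative at the point. -/
lemma aux_pos (K : Set (ℝ × ℝ)) (hK : ∀ p ∈ K, 0 < p.1 ∧ p.1 ≤ p.2) (M x y : ℝ)
    (hM : ∃ p ∈ K, p.2 = M) (hx : 0 ≤ x) (hxy : x ≤ y) (hyM : y ≤ M)
    (H : ∀ θ, 0 ≤ θ → θ ≤ M → ∃ p ∈ K, x * y + θ * (y - x) ≤ p.1 * p.2 + θ * (p.2 - p.1))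
    (hMK : ∀ p ∈ K, p.2 ≤ M)
    (t s B : ℝ) (hB : |s| ≤ B) (hpos : 0 ≤ t * y + s) :
    ∃ p ∈ K, t * x * y + B * y + s * x ≤
      B * p.2 + |p.1 * (t * p.2 + s)| := by
  obtain ⟨h1, h2⟩ := abs_le.mp hB
  have hB0 : 0 ≤ B := (abs_nonneg s).trans hB
  by_cases h0 : x * (t * y + s) = 0
  · obtain ⟨p, hp, hpM⟩ := hM
    refine ⟨p, hp, ?_⟩
    have := abs_nonneg (p.1 * (t * p.2 + s))
    have : B * y ≤ B * p.2 := by rw [hpM]; gcongr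
    nlinarith
  have hx' : 0 < x := lt_of_le_of_ne hx (fun h => h0 (by rw [← h]; ring))
  have hpos' : 0 < t * y + s := lt_of_le_of_ne hpos (fun h => h0 (by rw [← h]; ring))
  by_cases hneg : ∃ p ∈ K, t < 0 ∧ t * p.2 + s < 0
  · obtain ⟨p, hp, ht, hlt⟩ := hneg
    refine ⟨p, hp, ?_⟩
    have := abs_nonneg (p.1 * (t * p.2 + s))
    have hyb : y < p.2 := by
      by_contra! hc
      nlinarith
    have e1 : x * (t * y + s) ≤ x * (t * (y - p.2)) := by
      apply mul_le_mul_of_nonneg_left _ hx; linarith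
    have e2 : x * (-t) ≤ s := by nlinarith
    have e3 : x * (-t) * (p.2 - y) ≤ B * (p.2 - y) := by
      apply mul_le_mul_of_nonneg_right _ (by linarith); linarith
    linarith
  push Not at hneg
  have hD : 0 < t * (x + y) + B + s := by
    rcases le_or_gt 0 t with ht | ht
    · have := mul_nonneg ht hx
      linarith
    · nlinarith
  set θ := (y * B - s * x) / (t * (x + y) + B + s) with hθ
  have hθ0 : 0 ≤ θ := by
    apply div_nonneg _ hD.le
    nlinarith [mul_le_mul_of_nonneg_right h2 hx, mul_le_mul_of_nonneg_left hxy hB0]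
  have hDθ : θ * (t * (x + y) + B + s) = y * B - s * x := by
    rw [hθ]; field_simp
  have hyθ : θ ≤ y := by
    rw [hθ, div_le_iff₀ hD]
    have : 0 ≤ (x + y) * (t * y + s) := by apply mul_nonneg <;> linarith
    nlinarith
  obtain ⟨p, hp, hpf⟩ := H θ hθ0 (hyθ.trans hyM)
  refine ⟨p, hp, ?_⟩
  have := aux_key t s B x y p.1 p.2 θ hB hx' hxy hpos' (hK p hp).1 hθ hD hθ0 ?_ hpf
  · have := le_abs_self (p.1 * (t * p.2 + s))
    linarith
  · intro hb
    rcases le_or_gt 0 t with ht | ht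
    · have : 0 ≤ (t * θ + s) * (t * (x + y) + B + s) := by
        have : (t * θ + s) * (t * (x + y) + B + s) = (t * y + s) * (B + s) := by
          linear_combination t * hDθ
        rw [this]; apply mul_nonneg <;> linarith
      have := nonneg_of_mul_nonneg_left this hD
      have := mul_le_mul_of_nonneg_left hb ht
      linarith
    · exact hneg p hp ht

lemma aux_all (K : Set (ℝ × ℝ)) (hK : ∀ p ∈ K, 0 < p.1 ∧ p.1 ≤ p.2) (M x y : ℝ)
    (hM : ∃ p ∈ K, p.2 = M) (hx : 0 ≤ x) (hxy : x ≤ y) (hyM : y ≤ M)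
    (H : ∀ θ, 0 ≤ θ → θ ≤ M → ∃ p ∈ K, x * y + θ * (y - x) ≤ p.1 * p.2 + θ * (p.2 - p.1))
    (hMK : ∀ p ∈ K, p.2 ≤ M)
    (t s B : ℝ) (hB : |s| ≤ B) :
    ∃ p ∈ K, B * y + |x * (t * y + s)| ≤ B * p.2 + |p.1 * (t * p.2 + s)| := by
  rcases le_total 0 (t * y + s) with h | h
  · obtain ⟨p, hp, h'⟩ := aux_pos K hK M x y hM hx hxy hyM H hMK t s B hB h
    refine ⟨p, hp, ?_⟩
    rw [abs_of_nonneg (mul_nonneg hx h)]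
    linarith
  · obtain ⟨p, hp, h'⟩ := aux_pos K hK M x y hM hx hxy hyM H hMK (-t) (-s) B (by simpa using hB)
      (by linarith)
    refine ⟨p, hp, ?_⟩
    rw [abs_of_nonpos (mul_nonpos_of_nonneg_of_nonpos hx h)]
    have : p.1 * (-t * p.2 + -s) = -(p.1 * (t * p.2 + s)) := by ring
    rw [this, abs_neg] at h'
    linarith

/-- The conformal part. -/
noncomputable def cZ : Matrix (Fin 2) (Fin 2) ℝ →ₗ[ℝ] ℂ where
  toFun ξ := ⟨(ξ 0 0 + ξ 1 1) / 2, (ξ 1 0 - ξ 0 1) / 2⟩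
  map_add' ξ η := by apply Complex.ext <;> simp <;> ring
  map_smul' c ξ := by apply Complex.ext <;> simp <;> ring

/-- The anticonformal part. -/
noncomputable def cW : Matrix (Fin 2) (Fin 2) ℝ →ₗ[ℝ] ℂ where
  toFun ξ := ⟨(ξ 0 0 - ξ 1 1) / 2, (ξ 1 0 + ξ 0 1) / 2⟩
  map_add' ξ η := by apply Complex.ext <;> simp <;> ring
  map_smul' c ξ := by apply Complex.ext <;> simp <;> ring

/-- Reassembling a matrix from its conformal and anticonformal parts. -/
noncomputable def cM : ℂ × ℂ →ₗ[ℝ] Matrix (Fin 2) (Fin 2) ℝ where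
  toFun v := !![v.1.re + v.2.re, v.2.im - v.1.im; v.1.im + v.2.im, v.1.re - v.2.re]
  map_add' u v := by ext i j; fin_cases i <;> fin_cases j <;> simp <;> ring
  map_smul' c v := by ext i j; fin_cases i <;> fin_cases j <;> simp <;> ring

lemma cM_cZ_cW (ξ : Matrix (Fin 2) (Fin 2) ℝ) : cM (cZ ξ, cW ξ) = ξ := by
  ext i j; fin_cases i <;> fin_cases j <;> simp [cM, cZ, cW] <;> ring

lemma cZ_cM (v : ℂ × ℂ) : cZ (cM v) = v.1 := by
  apply Complex.ext <;> simp [cM, cZ] <;> ring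

lemma cW_cM (v : ℂ × ℂ) : cW (cM v) = v.2 := by
  apply Complex.ext <;> simp [cM, cW] <;> ring

lemma det_eq_cZ (ξ : Matrix (Fin 2) (Fin 2) ℝ) : ξ.det = ‖cZ ξ‖ ^ 2 - ‖cW ξ‖ ^ 2 := by
  rw [Matrix.det_fin_two, Complex.sq_norm, Complex.sq_norm, Complex.normSq_apply,
    Complex.normSq_apply]
  simp only [cZ, cW, LinearMap.coe_mk, AddHom.coe_mk]
  ring

lemma frobSq_eq_cZ (ξ : Matrix (Fin 2) (Fin 2) ℝ) :
    frobSq ξ = 2 * (‖cZ ξ‖ ^ 2 + ‖cW ξ‖ ^ 2) := by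
  rw [Complex.sq_norm, Complex.sq_norm, Complex.normSq_apply, Complex.normSq_apply]
  simp only [cZ, cW, LinearMap.coe_mk, AddHom.coe_mk, frobSq, Fin.sum_univ_two]
  ring

lemma lam_eq (ξ : Matrix (Fin 2) (Fin 2) ℝ) :
    lam1 ξ = |‖cZ ξ‖ - ‖cW ξ‖| ∧ lam2 ξ = ‖cZ ξ‖ + ‖cW ξ‖ := by
  have hp := norm_nonneg (cZ ξ)
  have hq := norm_nonneg (cW ξ)
  unfold lam1 lam2
  rw [frobSq_eq_cZ, det_eq_cZ]
  set p := ‖cZ ξ‖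
  set q := ‖cW ξ‖
  rcases le_total q p with h | h
  · rw [abs_of_nonneg (by nlinarith : 0 ≤ p ^ 2 - q ^ 2), abs_of_nonneg (by linarith : 0 ≤ p - q)]
    have e1 : 2 * (p ^ 2 + q ^ 2) + 2 * (p ^ 2 - q ^ 2) = (2 * p) ^ 2 := by ring
    have e2 : 2 * (p ^ 2 + q ^ 2) - 2 * (p ^ 2 - q ^ 2) = (2 * q) ^ 2 := by ring
    rw [e1, e2, Real.sqrt_sq (by linarith), Real.sqrt_sq (by linarith)]
    constructor <;> ring
  · rw [abs_of_nonpos (by nlinarith : p ^ 2 - q ^ 2 ≤ 0), abs_of_nonpos (by linarith : p - q ≤ 0)]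
    have e1 : 2 * (p ^ 2 + q ^ 2) + 2 * -(p ^ 2 - q ^ 2) = (2 * q) ^ 2 := by ring
    have e2 : 2 * (p ^ 2 + q ^ 2) - 2 * -(p ^ 2 - q ^ 2) = (2 * p) ^ 2 := by ring
    rw [e1, e2, Real.sqrt_sq (by linarith), Real.sqrt_sq (by linarith)]
    constructor <;> ring

/-- A real-linear functional on `ℂ`: its dual norm. -/
lemma functional_norm (φ : ℂ →ₗ[ℝ] ℝ) : ∃ A : ℝ, 0 ≤ A ∧ (∀ z, φ z ≤ A * ‖z‖) ∧
    ∀ r : ℝ, 0 ≤ r → ∃ z : ℂ, ‖z‖ = r ∧ φ z = A * r := by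
  set c : ℂ := ⟨φ 1, φ Complex.I⟩ with hc
  have hφ : ∀ z, φ z = (starRingEnd ℂ c * z).re := by
    intro z
    have : z = z.re • (1 : ℂ) + z.im • Complex.I := by
      apply Complex.ext <;> simp
    conv_lhs => rw [this, map_add, map_smul, map_smul]
    simp [hc]; ring
  refine ⟨‖c‖, norm_nonneg _, fun z => ?_, fun r hr => ?_⟩
  · rw [hφ]
    refine (Complex.re_le_norm _).trans ?_
    simp
  · by_cases h : c = 0
    · refine ⟨r, by simp [abs_of_nonneg hr], ?_⟩
      rw [hφ, h]; simp
    · have hn : ‖c‖ ≠ 0 := by simpa using h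
      refine ⟨((r / ‖c‖ : ℝ) : ℂ) * c, ?_, ?_⟩
      · rw [norm_mul, Complex.norm_real, Real.norm_of_nonneg (by positivity)]
        field_simp
      · rw [hφ]
        have : starRingEnd ℂ c * (((r / ‖c‖ : ℝ) : ℂ) * c) =
            (((r / ‖c‖) * ‖c‖ ^ 2 : ℝ) : ℂ) := by
          rw [mul_left_comm, Complex.conj_mul']; push_cast; ring
        rw [this, Complex.ofReal_re]; field_simp

/-- The lifted set. -/
def liftS (K : Set (ℝ × ℝ)) : Set (ℂ × ℂ × ℝ) :=
  (fun v : ℂ × ℂ => (v.1, v.2, ‖v.1‖ ^ 2 - ‖v.2‖ ^ 2)) ''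
    {v : ℂ × ℂ | (|‖v.1‖ - ‖v.2‖|, ‖v.1‖ + ‖v.2‖) ∈ K}

lemma mem_hull (K : Set (ℝ × ℝ)) (hK : ∀ p ∈ K, 0 < p.1 ∧ p.1 ≤ p.2)
    (M : ℝ) (hM : ∃ p ∈ K, p.2 = M) (hMK : ∀ p ∈ K, p.2 ≤ M) (z w : ℂ)
    (hyM : ‖z‖ + ‖w‖ ≤ M)
    (H : ∀ θ, 0 ≤ θ → θ ≤ M → ∃ p ∈ K, |‖z‖ - ‖w‖| * (‖z‖ + ‖w‖) +
      θ * ((‖z‖ + ‖w‖) - |‖z‖ - ‖w‖|) ≤ p.1 * p.2 + θ * (p.2 - p.1)) :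
    (z, w, ‖z‖ ^ 2 - ‖w‖ ^ 2) ∈ closure (convexHull ℝ (liftS K)) := by
  by_contra hcon
  obtain ⟨ℓ, u, hℓ, hu⟩ := geometric_hahn_banach_closed_point
    (convex_convexHull ℝ (liftS K)).closure isClosed_closure hcon
  obtain ⟨A, hA0, hA1, hA2⟩ := functional_norm (ℓ.toLinearMap ∘ₗ LinearMap.inl ℝ ℂ (ℂ × ℝ))
  obtain ⟨C, hC0, hC1, hC2⟩ := functional_norm
    (ℓ.toLinearMap ∘ₗ LinearMap.inr ℝ ℂ (ℂ × ℝ) ∘ₗ LinearMap.inl ℝ ℂ ℝ)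
  set t := ℓ (0, 0, 1) with ht
  have hdec : ∀ (z w : ℂ) (d : ℝ), ℓ (z, w, d) = ℓ (z, 0, 0) + ℓ (0, w, 0) + d * t := by
    intro z w d
    rw [ht, ← smul_eq_mul, ← map_smul, ← map_add, ← map_add]
    simp
  simp only [LinearMap.comp_apply, LinearMap.inl_apply, LinearMap.inr_apply,
    ContinuousLinearMap.coe_coe] at hA1 hA2 hC1 hC2
  have hzero : ((0 : ℂ), (0 : ℝ)) = 0 := rfl
  simp only [hzero] at hdec
  have hz := norm_nonneg z
  have hw := norm_nonneg w
  -- the value on `K`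
  have hval : ∀ a ∈ K, (A + C) / 2 * a.2 + |a.1 * (t * a.2 + (A - C) / 2)| < u := by
    intro a ha
    have hpair : ∀ p q : ℝ, 0 ≤ p → 0 ≤ q → |p - q| = a.1 → p + q = a.2 →
        A * p + C * q + (p ^ 2 - q ^ 2) * t < u := by
      intro p q hp hq h1 h2
      obtain ⟨z', hz1, hz2⟩ := hA2 p hp
      obtain ⟨w', hw1, hw2⟩ := hC2 q hq
      have := hℓ (z', w', ‖z'‖ ^ 2 - ‖w'‖ ^ 2) (subset_closure (subset_convexHull ℝ _
        ⟨(z', w'), by simpa [hz1, hw1, h1, h2] using ha, rfl⟩))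
      rwa [hdec, hz2, hw2, hz1, hw1] at this
    obtain ⟨ha1, ha2⟩ := hK a ha
    have e1 := hpair ((a.1 + a.2) / 2) ((a.2 - a.1) / 2) (by linarith) (by linarith)
      (by rw [abs_of_nonneg] <;> linarith) (by ring)
    have e2 := hpair ((a.2 - a.1) / 2) ((a.1 + a.2) / 2) (by linarith) (by linarith)
      (by rw [abs_of_nonpos] <;> linarith) (by ring)
    rcases abs_cases (a.1 * (t * a.2 + (A - C) / 2)) with ⟨h, _⟩ | ⟨h, _⟩ <;> rw [h] <;> linarith
  obtain ⟨p, hp, hle⟩ := aux_all K hK M (|‖z‖ - ‖w‖|) (‖z‖ + ‖w‖) hM (abs_nonneg _)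
    (by rw [abs_le]; constructor <;> linarith) hyM H hMK t ((A - C) / 2) ((A + C) / 2)
    (by rw [abs_le]; constructor <;> linarith)
  have h1 := hval p hp
  rw [hdec] at hu
  have h2 := hA1 z
  have h3 := hC1 w
  have h4 : A * ‖z‖ + C * ‖w‖ + (‖z‖ ^ 2 - ‖w‖ ^ 2) * t ≤
      (A + C) / 2 * (‖z‖ + ‖w‖) + |(|‖z‖ - ‖w‖|) * (t * (‖z‖ + ‖w‖) + (A - C) / 2)| := by
    rw [abs_mul, abs_abs, ← abs_mul]
    have := le_abs_self ((‖z‖ - ‖w‖) * (t * (‖z‖ + ‖w‖) + (A - C) / 2))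
    linarith
  linarith

/-- characterization of `E^{pc}` via the functions `f_θ`. -/
theorem pcHull_characterization (K : Set (ℝ × ℝ)) (hKc : IsCompact K) (hKne : K.Nonempty)
    (hKsub : K ⊆ {p : ℝ × ℝ | 0 < p.1 ∧ p.1 ≤ p.2})
    (E : Set (Matrix (Fin 2) (Fin 2) ℝ)) (hE : E = {ξ | (lam1 ξ, lam2 ξ) ∈ K}) :
    pcHull E = {ξ | ∀ θ ∈ Set.Icc (0 : ℝ) (sSup (Prod.snd '' K)),
      ftheta θ (lam1 ξ, lam2 ξ) ≤ sSup (ftheta θ '' K)} := by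
  have hK : ∀ p ∈ K, 0 < p.1 ∧ p.1 ≤ p.2 := fun p hp => hKsub hp
  have hcs : IsCompact (Prod.snd '' K) := hKc.image continuous_snd
  have hcf : ∀ θ, IsCompact (ftheta θ '' K) := fun θ =>
    hKc.image (by unfold ftheta; fun_prop)
  set M := sSup (Prod.snd '' K) with hMdef
  have hM : ∃ p ∈ K, p.2 = M := hcs.sSup_mem (hKne.image _)
  have hMK : ∀ p ∈ K, p.2 ≤ M := fun p hp => le_csSup hcs.bddAbove ⟨p, hp, rfl⟩
  have hfle : ∀ θ, ∀ p ∈ K, ftheta θ p ≤ sSup (ftheta θ '' K) := fun θ p hp =>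
    le_csSup (hcf θ).bddAbove ⟨p, hp, rfl⟩
  have hfmem : ∀ θ, ∃ p ∈ K, ftheta θ p = sSup (ftheta θ '' K) := fun θ =>
    (hcf θ).sSup_mem (hKne.image _)
  ext ξ
  constructor
  · rintro hξ θ ⟨hθ0, hθM⟩
    set m := sSup (ftheta θ '' K) with hm
    have hmθ : θ ^ 2 ≤ m := by
      obtain ⟨p, hp, hpM⟩ := hM
      refine le_trans ?_ (hfle θ p hp)
      have := hK p hp
      unfold ftheta
      nlinarith [mul_nonneg (sub_nonneg.mpr (hpM ▸ hθM : θ ≤ p.2)) (by linarith : 0 ≤ p.1 + θ)]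
    let g : Matrix (Fin 2) (Fin 2) ℝ × ℝ → ℝ := fun v =>
      max (v.2 + 2 * θ * ‖cW v.1‖) (-v.2 + 2 * θ * ‖cZ v.1‖) + -m
    have hcn : ∀ L : Matrix (Fin 2) (Fin 2) ℝ →ₗ[ℝ] ℂ,
        ConvexOn ℝ Set.univ (fun v : Matrix (Fin 2) (Fin 2) ℝ × ℝ => 2 * θ * ‖L v.1‖) := by
      intro L
      have := (convexOn_norm (convex_univ (𝕜 := ℝ) (E := ℂ))).comp_linearMap
        (L ∘ₗ LinearMap.fst ℝ _ ℝ)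
      exact this.smul (by linarith : 0 ≤ 2 * θ)
    have hg : ConvexOn ℝ Set.univ g := by
      refine ConvexOn.add_const (ConvexOn.sup ?_ ?_) (-m)
      · exact ((LinearMap.snd ℝ (Matrix (Fin 2) (Fin 2) ℝ) ℝ).convexOn convex_univ).add (hcn cW)
      · exact ((-LinearMap.snd ℝ (Matrix (Fin 2) (Fin 2) ℝ) ℝ).convexOn convex_univ).add (hcn cZ)
    have hkey := hξ (fun η => g (η, η.det)) ⟨g, hg, fun _ => rfl⟩ ?_
    · simp only [g] at hkey
      rw [(lam_eq ξ).1, (lam_eq ξ).2]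
      unfold ftheta
      rw [det_eq_cZ] at hkey
      set p := ‖cZ ξ‖
      set q := ‖cW ξ‖
      have h1 := le_max_left (p ^ 2 - q ^ 2 + 2 * θ * q) (-(p ^ 2 - q ^ 2) + 2 * θ * p)
      have h2 := le_max_right (p ^ 2 - q ^ 2 + 2 * θ * q) (-(p ^ 2 - q ^ 2) + 2 * θ * p)
      rcases abs_cases (p - q) with ⟨h, _⟩ | ⟨h, _⟩ <;> simp only [h] <;> nlinarith
    · intro η hη
      rw [hE] at hη
      have hη' : (lam1 η, lam2 η) ∈ K := hη
      have h1 : ftheta θ (lam1 η, lam2 η) ≤ m := hfle θ _ hη'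
      have h2 := hK _ hη'
      rw [(lam_eq η).1, (lam_eq η).2] at h1 h2
      simp only [g]
      rw [det_eq_cZ]
      unfold ftheta at h1
      have hp := norm_nonneg (cZ η)
      have hq := norm_nonneg (cW η)
      set p := ‖cZ η‖
      set q := ‖cW η‖
      simp only at h1 h2
      -- value of the other branch
      have h3 : -(|p - q| * (p + q)) + θ * (p + q + |p - q|) ≤ m := by
        rcases le_total θ (p + q) with h | h
        · nlinarith [mul_nonneg h2.1.le (sub_nonneg.mpr h)]
        · nlinarith [mul_nonneg (sub_nonneg.mpr h) (sub_nonneg.mpr (h2.2.trans h))]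
      have : max (p ^ 2 - q ^ 2 + 2 * θ * q) (-(p ^ 2 - q ^ 2) + 2 * θ * p) ≤ m := by
        rcases abs_cases (p - q) with ⟨h, _⟩ | ⟨h, _⟩ <;> rw [h] at h1 h3 <;>
          apply max_le <;> linarith
      linarith
  · intro hξ
    simp only [Set.mem_setOf_eq] at hξ
    rw [(lam_eq ξ).1, (lam_eq ξ).2] at hξ
    have hp := norm_nonneg (cZ ξ)
    have hq := norm_nonneg (cW ξ)
    have hM0 : 0 < M := by
      obtain ⟨p, hp, hpM⟩ := hM
      have := hK p hp
      linarith
    have hyM : ‖cZ ξ‖ + ‖cW ξ‖ ≤ M := by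
      have h1 := hξ M ⟨hM0.le, le_rfl⟩
      obtain ⟨p, hp, hpe⟩ := hfmem M
      rw [← hpe] at h1
      unfold ftheta at h1
      simp only at h1
      by_contra! hc
      have h2 := hMK p hp
      have h3 := hK p hp
      have := mul_nonneg (sub_nonneg.mpr h2) (by linarith : 0 ≤ p.1 + M)
      have h4 := abs_nonneg (‖cZ ξ‖ - ‖cW ξ‖)
      have := mul_pos (sub_pos.mpr hc) (by linarith : 0 < |‖cZ ξ‖ - ‖cW ξ‖| + M)
      nlinarith
    have hmem := mem_hull K hK M hM hMK (cZ ξ) (cW ξ) hyM (by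
      intro θ h0 h1
      obtain ⟨p, hp, hpe⟩ := hfmem θ
      refine ⟨p, hp, ?_⟩
      have := hξ θ ⟨h0, h1⟩
      rw [← hpe] at this
      exact this)
    rintro f ⟨g, hg, hfg⟩ hfE
    let L : ℂ × ℂ × ℝ →ₗ[ℝ] Matrix (Fin 2) (Fin 2) ℝ × ℝ :=
      LinearMap.prod (cM ∘ₗ LinearMap.prod (LinearMap.fst ℝ ℂ (ℂ × ℝ))
        (LinearMap.fst ℝ ℂ ℝ ∘ₗ LinearMap.snd ℝ ℂ (ℂ × ℝ)))
        (LinearMap.snd ℝ ℂ ℝ ∘ₗ LinearMap.snd ℝ ℂ (ℂ × ℝ))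
    have hL : ∀ z w d, L (z, w, d) = (cM (z, w), d) := fun _ _ _ => rfl
    have hgL : ConvexOn ℝ Set.univ (g ∘ L) := hg.comp_linearMap L
    have hcont : Continuous (g ∘ L) := by
      have := hgL.continuousOn isOpen_univ
      rwa [continuousOn_univ] at this
    have hsub : convexHull ℝ (liftS K) ⊆ {v | v ∈ Set.univ ∧ (g ∘ L) v ≤ 0} := by
      apply convexHull_min _ (hgL.convex_le 0)
      rintro _ ⟨v, hv, rfl⟩
      refine ⟨trivial, ?_⟩
      have h1 := hfE (cM v) (by
        rw [hE]
        simp only [Set.mem_setOf_eq]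
        rw [(lam_eq _).1, (lam_eq _).2, cZ_cM, cW_cM]
        exact hv)
      rw [hfg, det_eq_cZ, cZ_cM, cW_cM] at h1
      exact h1
    have hsub' : closure (convexHull ℝ (liftS K)) ⊆ {v | (g ∘ L) v ≤ 0} :=
      closure_minimal (fun v hv => (hsub hv).2) (isClosed_le hcont continuous_const)
    have h2 := hsub' hmem
    simp only [Set.mem_setOf_eq, Function.comp_apply, hL] at h2
    rw [cM_cZ_cW, ← det_eq_cZ, ← hfg] at h2
    exact h2
end

section
/- Let K ⊂ {(x,y) ∈ ℝ² : 0 < x ≤ y} be a compact set and let E := {ξ ∈ ℝ^{2×2} : (λ₁(ξ), λ₂(ξ)) ∈ K}. Then the interior of E^{pc} satisfies int(E^{pc}) = { ξ ∈ ℝ^{2×2} : f_θ(λ₁(ξ), λ₂(ξ)) < max_{(a,b) ∈ K} f_θ(a,b) for all θ ∈ [0, max_{(a,b) ∈ K} b] }. -/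
open scoped BigOperators

lemma stepT (K : Set (ℝ × ℝ)) (M x y k : ℝ) 
    (hK : ∀ p ∈ K, 0 < p.1 ∧ p.1 ≤ p.2) (hx : 0 ≤ x) (hxy : x ≤ y) (hyM : y ≤ M)
    (H : ∀ θ, 0 ≤ θ → θ ≤ M → ∃ p ∈ K, x * y + θ * (y - x) ≤ p.1 * p.2 + θ * (p.2 - p.1))
    (hk : 0 ≤ k) (hkx : k * x ≤ y) :
    ∃ p ∈ K, 0 ≤ k * (p.1 - x) + (p.2 - y) ∧
      0 ≤ (1 + k) * ((p.1 - x) * (p.2 - y)) + (x + y) * (k * (p.1 - x) + (p.2 - y)) := by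
  have h1 : 0 < 1 + k := by linarith
  obtain ⟨⟨a, b⟩, hp, h⟩ := H ((y - k * x) / (1 + k)) (div_nonneg (by linarith) h1.le)
    (by rw [div_le_iff₀ h1]; nlinarith [mul_nonneg hk hx, mul_nonneg hk (hx.trans hxy)])
  obtain ⟨ha, hab⟩ := hK _ hp
  simp only at *
  refine ⟨_, hp, ?_⟩
  simp only
  have hf : 0 ≤ (1 + k) * ((a - x) * (b - y)) + (x + y) * (k * (a - x) + (b - y)) := by
    have h2 := mul_le_mul_of_nonneg_left h h1.le
    have h3 : (1 + k) * ((y - k * x) / (1 + k)) = y - k * x := by field_simp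
    have h4 : (1 + k) * (x * y + (y - k * x) / (1 + k) * (y - x)) =
      (1 + k) * (x * y) + (y - k * x) * (y - x) := by linear_combination (y - x) * h3
    have h5 : (1 + k) * (a * b + (y - k * x) / (1 + k) * (b - a)) =
      (1 + k) * (a * b) + (y - k * x) * (b - a) := by linear_combination (b - a) * h3
    rw [h4, h5] at h2
    linarith
  refine ⟨?_, hf⟩
  by_contra hL
  push Not at hL
  have hb : 0 < b := by linarith
  have hy : 0 < y := by nlinarith
  have hP : 0 < (a - x) * (b - y) := by
    by_contra hP
    push Not at hP
    have := mul_neg_of_pos_of_neg (show 0 < x + y by linarith) hL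
    nlinarith
  rcases pos_and_pos_or_neg_and_neg_of_mul_pos hP with ⟨p, q⟩ | ⟨p, q⟩
  · nlinarith
  · have e1 : (a - x) * (b - y) ≤ x * (y - b) := by nlinarith
    have e2 : k * ((a - x) * (b - y)) ≤ k * ((x - a) * y) := by
      apply mul_le_mul_of_nonneg_left _ hk; nlinarith
    have e3 : 0 < y * (y - b) := mul_pos hy (by linarith)
    have e4 : 0 ≤ k * (x * (x - a)) := mul_nonneg hk (mul_nonneg hx (by linarith))
    nlinarith

lemma core_pos (K : Set (ℝ × ℝ)) (M x y s α β : ℝ) 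
    (hK : ∀ p ∈ K, 0 < p.1 ∧ p.1 ≤ p.2) (hM : ∃ p ∈ K, p.2 = M)
    (hx : 0 ≤ x) (hxy : x ≤ y) (hyM : y ≤ M)
    (H : ∀ θ, 0 ≤ θ → θ ≤ M → ∃ p ∈ K, x * y + θ * (y - x) ≤ p.1 * p.2 + θ * (p.2 - p.1))
    (h1 : α ≤ β) (h2 : -α ≤ β) (hs : 0 ≤ s) :
    ∃ p ∈ K, ∃ σ : ℝ, (σ = 1 ∨ σ = -1) ∧
      s * (x * y) + α * x + β * y ≤ σ * (s * (p.1 * p.2) + α * p.1) + β * p.2 := by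
  obtain ⟨⟨a0, b0⟩, hp0, rfl⟩ := hM
  obtain ⟨ha0, hab0⟩ := hK _ hp0
  simp only at *
  have hβ : 0 ≤ β := by linarith
  have hy0 : 0 ≤ y := hx.trans hxy
  by_cases hn : 0 ≤ s * y + α
  · by_cases hd : s * x + β = 0
    · have hb : β = 0 := by nlinarith [mul_nonneg hs hx]
      have ha : α = 0 := by linarith
      have hsx : s * x = 0 := by linarith
      refine ⟨_, hp0, 1, Or.inl rfl, ?_⟩
      simp only [hb, ha]
      have : 0 ≤ s * (a0 * b0) := mul_nonneg hs (mul_nonneg ha0.le (by linarith))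
      have : s * (x * y) = 0 := by rw [← mul_assoc, hsx, zero_mul]
      linarith
    · have hd' : 0 < s * x + β := lt_of_le_of_ne (by nlinarith [mul_nonneg hs hx]) (Ne.symm hd)
      set d := s * x + β with hdd
      set k := (s * y + α) / d with hkd
      have hkk : k * d = s * y + α := by rw [hkd]; field_simp
      have hk : 0 ≤ k := div_nonneg hn hd'.le
      obtain ⟨⟨a, b⟩, hp, hL, hf⟩ := stepT K b0 x y k hK hx hxy hyM H hk
        (by rw [hkd, div_mul_eq_mul_div, div_le_iff₀ hd']; nlinarith [mul_nonneg hx hβ])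
      refine ⟨_, hp, 1, Or.inl rfl, ?_⟩
      simp only at *
      set L := k * (a - x) + (b - y) with hLd
      have e : s * (a * b) + α * a + β * b - (s * (x * y) + α * x + β * y) =
        s * ((a - x) * (b - y)) + d * L := by
        rw [hLd, hdd] ; rw [hdd] at hkk; linear_combination (x - a) * hkk
      have h3 : 0 ≤ s * ((a - x) * (b - y)) + d * L := by
        have h4 := mul_nonneg hs hf
        have h5 : s * (x + y) ≤ d * (1 + k) := by nlinarith
        have h6 := mul_le_mul_of_nonneg_right h5 hL
        have h7 : 0 ≤ (1 + k) * (s * ((a - x) * (b - y)) + d * L) := by nlinarith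
        exact nonneg_of_mul_nonneg_right h7 (by linarith)
      linarith
  · push Not at hn
    have t : β * y ≤ β * b0 := mul_le_mul_of_nonneg_left hyM hβ
    have t2 : x * (s * y + α) ≤ 0 := mul_nonpos_of_nonneg_of_nonpos hx hn.le
    rcases le_total 0 (s * b0 + α) with h | h
    · refine ⟨_, hp0, 1, Or.inl rfl, ?_⟩
      simp only
      nlinarith [mul_nonneg ha0.le h]
    · refine ⟨_, hp0, -1, Or.inr rfl, ?_⟩
      simp only
      nlinarith [mul_nonneg ha0.le (neg_nonneg.2 h)]

lemma core_all (K : Set (ℝ × ℝ)) (M x y s α β : ℝ) 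
    (hK : ∀ p ∈ K, 0 < p.1 ∧ p.1 ≤ p.2) (hM : ∃ p ∈ K, p.2 = M) (hM' : ∀ p ∈ K, p.2 ≤ M)
    (hx : 0 ≤ x) (hxy : x ≤ y) 
    (H : ∀ θ, 0 ≤ θ → θ ≤ M → ∃ p ∈ K, x * y + θ * (y - x) ≤ p.1 * p.2 + θ * (p.2 - p.1))
    (h1 : α ≤ β) (h2 : -α ≤ β) :
    ∃ p ∈ K, ∃ σ : ℝ, (σ = 1 ∨ σ = -1) ∧
      s * (x * y) + α * x + β * y ≤ σ * (s * (p.1 * p.2) + α * p.1) + β * p.2 := by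
  have hM0 : 0 < M := by
    obtain ⟨p, hp, rfl⟩ := hM
    have := hK p hp
    linarith
  have hyM : y ≤ M := by
    obtain ⟨p, hp, h⟩ := H M hM0.le le_rfl
    have := hK p hp
    have := hM' p hp
    by_contra hc
    push Not at hc
    nlinarith [mul_pos (show 0 < x + M by linarith) (sub_pos.2 hc),
      mul_nonneg (show 0 ≤ p.1 + M by linarith) (sub_nonneg.2 this)]
  rcases le_total 0 s with hs | hs
  · exact core_pos K M x y s α β hK hM hx hxy hyM H h1 h2 hs
  obtain ⟨r, rfl⟩ : ∃ r, s = -r := ⟨-s, by ring⟩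
  have hr : 0 ≤ r := by linarith
  have hβ : 0 ≤ β := by linarith
  have hy0 : 0 ≤ y := hx.trans hxy
  rcases le_or_gt α (r * y) with hc | hc
  · obtain ⟨p, hp, σ, hσ, h⟩ := core_pos K M x y r (-α) β hK hM hx hxy hyM H h2 (by linarith) hr
    refine ⟨p, hp, -σ, by rcases hσ with rfl | rfl <;> simp, ?_⟩
    nlinarith [mul_nonneg hx (sub_nonneg.2 hc)]
  have hα : 0 < α := lt_of_le_of_lt (mul_nonneg hr hy0) hc
  rcases lt_or_ge α (r * M) with hc2 | hc2
  · obtain ⟨⟨a, b⟩, hp, rfl⟩ := hM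
    obtain ⟨ha, hab⟩ := hK _ hp
    simp only at *
    refine ⟨_, hp, -1, Or.inr rfl, ?_⟩
    simp only
    have hr' : 0 < r := by nlinarith
    have k1 : (α - r * y) * x ≤ (α - r * y) * y := mul_le_mul_of_nonneg_left hxy (by linarith)
    have k2 : 0 ≤ (α - r * y) * (β - r * y) := mul_nonneg (by linarith) (by linarith)
    have k3 : β * α ≤ β * (r * b) := mul_le_mul_of_nonneg_left hc2.le hβ
    have k4 : r * ((α - r * y) * y + β * y) ≤ r * (β * b) := by nlinarith
    have k5 := le_of_mul_le_mul_left k4 hr'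
    nlinarith [mul_nonneg ha.le (sub_nonneg.2 hc2.le)]
  · have hxr : r * x ≤ r * y := mul_le_mul_of_nonneg_left hxy hr
    have hd' : 0 < β - r * x := by linarith
    set d := β - r * x with hdd
    set k := (α - r * y) / d with hkd
    have hkk : k * d = α - r * y := by rw [hkd]; field_simp
    have hk : 0 ≤ k := div_nonneg (by linarith) hd'.le
    obtain ⟨⟨a, b⟩, hp, hL, hf⟩ := stepT K M x y k hK hx hxy hyM H hk
      (by rw [hkd, div_mul_eq_mul_div, div_le_iff₀ hd']; nlinarith [mul_nonneg hx hβ])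
    refine ⟨_, hp, 1, Or.inl rfl, ?_⟩
    have hbM := hM' _ hp
    simp only at *
    set L := k * (a - x) + (b - y) with hLd
    have e : -r * (a * b) + α * a + β * b - (-r * (x * y) + α * x + β * y) =
        -r * ((a - x) * (b - y)) + d * L := by
      rw [hLd, hdd] ; rw [hdd] at hkk; linear_combination (x - a) * hkk
    have h3 : 0 ≤ -r * ((a - x) * (b - y)) + d * L := by
      have hdL := mul_nonneg hd'.le hL
      rcases le_or_gt ((a - x) * (b - y)) 0 with hP | hP
      · nlinarith
      rcases pos_and_pos_or_neg_and_neg_of_mul_pos hP with ⟨p, q⟩ | ⟨p, q⟩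
      · have : d * L = (α - r * y) * (a - x) + d * (b - y) := by
          rw [hLd]; linear_combination (a - x) * hkk
        rw [this]
        have : 0 ≤ (α - r * b) * (a - x) := 
          mul_nonneg (by nlinarith) p.le
        nlinarith
      · nlinarith
    linarith

noncomputable def nrm (x y : ℝ) : ℝ := Real.sqrt (x ^ 2 + y ^ 2)

lemma nrm_nonneg (x y : ℝ) : 0 ≤ nrm x y := Real.sqrt_nonneg _

lemma nrm_sq (x y : ℝ) : nrm x y ^ 2 = x ^ 2 + y ^ 2 := Real.sq_sqrt (by positivity)

lemma nrm_eq {x y r : ℝ} (hr : 0 ≤ r) (h : x ^ 2 + y ^ 2 = r ^ 2) : nrm x y = r := by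
  rw [nrm, h, Real.sqrt_sq hr]

lemma nrm_cs (x y a b : ℝ) : x * a + y * b ≤ nrm x y * nrm a b := by
  apply le_of_abs_le
  apply abs_le_of_sq_le_sq _ (mul_nonneg (nrm_nonneg _ _) (nrm_nonneg _ _))
  rw [mul_pow, nrm_sq, nrm_sq]
  nlinarith [sq_nonneg (x * b - y * a)]

lemma nrm_unit (x y : ℝ) : ∃ e f : ℝ, e ^ 2 + f ^ 2 = 1 ∧ x * e + y * f = nrm x y := by
  by_cases h : nrm x y = 0
  · refine ⟨1, 0, by norm_num, ?_⟩
    have := nrm_sq x y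
    rw [h] at this ⊢
    nlinarith [sq_nonneg x, sq_nonneg y]
  · have := nrm_sq x y
    refine ⟨x / nrm x y, y / nrm x y, ?_, ?_⟩
    · field_simp; linarith
    · field_simp; linarith

abbrev Mat2 := Matrix (Fin 2) (Fin 2) ℝ

noncomputable def zn (ξ : Mat2) : ℝ := nrm ((ξ 0 0 + ξ 1 1) / 2) ((ξ 1 0 - ξ 0 1) / 2)

noncomputable def wn (ξ : Mat2) : ℝ := nrm ((ξ 0 0 - ξ 1 1) / 2) ((ξ 1 0 + ξ 0 1) / 2)

lemma zn_nonneg (ξ : Mat2) : 0 ≤ zn ξ := nrm_nonneg _ _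
lemma wn_nonneg (ξ : Mat2) : 0 ≤ wn ξ := nrm_nonneg _ _

lemma det_zw (ξ : Mat2) : ξ.det = zn ξ ^ 2 - wn ξ ^ 2 := by
  rw [zn, wn, nrm_sq, nrm_sq, Matrix.det_fin_two]; ring

lemma frob_zw (ξ : Mat2) : frobSq ξ = 2 * (zn ξ ^ 2 + wn ξ ^ 2) := by
  rw [zn, wn, nrm_sq, nrm_sq, frobSq]; simp [Fin.sum_univ_two]; ring

lemma lam_zw (ξ : Mat2) : lam1 ξ = |zn ξ - wn ξ| ∧ lam2 ξ = zn ξ + wn ξ := by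
  have hz := zn_nonneg ξ
  have hw := wn_nonneg ξ
  rw [lam1, lam2, frob_zw, det_zw]
  generalize zn ξ = z at *
  generalize wn ξ = w at *
  rcases le_total w z with h | h
  · rw [abs_of_nonneg (by nlinarith), abs_of_nonneg (by linarith),
      show 2 * (z ^ 2 + w ^ 2) + 2 * (z ^ 2 - w ^ 2) = (2 * z) ^ 2 by ring,
      show 2 * (z ^ 2 + w ^ 2) - 2 * (z ^ 2 - w ^ 2) = (2 * w) ^ 2 by ring,
      Real.sqrt_sq (by linarith), Real.sqrt_sq (by linarith)]
    constructor <;> ring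
  · rw [abs_of_nonpos (by nlinarith), abs_of_nonpos (by linarith),
      show 2 * (z ^ 2 + w ^ 2) + 2 * -(z ^ 2 - w ^ 2) = (2 * w) ^ 2 by ring,
      show 2 * (z ^ 2 + w ^ 2) - 2 * -(z ^ 2 - w ^ 2) = (2 * z) ^ 2 by ring,
      Real.sqrt_sq (by linarith), Real.sqrt_sq (by linarith)]
    constructor <;> ring

lemma hull_lin (E : Set Mat2) (ξ : Mat2) (h : ξ ∈ pcHull E) (a b c d s k : ℝ)
    (hE : ∀ η ∈ E, a * η 0 0 + b * η 0 1 + c * η 1 0 + d * η 1 1 + s * η.det ≤ k) :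
    a * ξ 0 0 + b * ξ 0 1 + c * ξ 1 0 + d * ξ 1 1 + s * ξ.det ≤ k := by
  have := h (fun ξ => a * ξ 0 0 + b * ξ 0 1 + c * ξ 1 0 + d * ξ 1 1 + s * ξ.det - k)
    ⟨fun p => a * p.1 0 0 + b * p.1 0 1 + c * p.1 1 0 + d * p.1 1 1 + s * p.2 - k,
      ⟨convex_univ, fun x _ y _ t u _ _ htu => by
        simp only [Prod.fst_add, Prod.snd_add, Prod.smul_fst, Prod.smul_snd, Matrix.add_apply,
          Matrix.smul_apply, smul_eq_mul]
        obtain rfl : u = 1 - t := by linarith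
        apply le_of_eq; ring⟩, fun _ => rfl⟩
    (fun η hη => by have := hE η hη; linarith)
  linarith

lemma lin_hull (E : Set Mat2) (ξ : Mat2) (h : ∀ a b c d s : ℝ, ∃ η ∈ E,
    a * ξ 0 0 + b * ξ 0 1 + c * ξ 1 0 + d * ξ 1 1 + s * ξ.det ≤
    a * η 0 0 + b * η 0 1 + c * η 1 0 + d * η 1 1 + s * η.det) : ξ ∈ pcHull E := by
  rintro f ⟨g, hg, hfg⟩ hE
  by_contra hc
  have : LocallyConvexSpace ℝ Mat2 :=
    inferInstanceAs (LocallyConvexSpace ℝ (Fin 2 → Fin 2 → ℝ))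
  have hcont : Continuous g := by
    rw [← continuousOn_univ]
    exact ConvexOn.continuousOn (E := (Fin 2 → Fin 2 → ℝ) × ℝ) isOpen_univ hg
  have hconv : Convex ℝ {p | g p ≤ 0} := by simpa using hg.convex_le 0
  have hclosed : IsClosed {p | g p ≤ 0} := isClosed_le hcont continuous_const
  have hnot : (ξ, ξ.det) ∉ {p | g p ≤ 0} := by
    rw [Set.mem_ofPred_eq, ← hfg]; exact hc
  obtain ⟨l, u, hl, hu⟩ := geometric_hahn_banach_closed_point hconv hclosed hnot
  have key : ∀ η : Mat2, ∀ t : ℝ, l (η, t) =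
      l (Matrix.single 0 0 1, 0) * η 0 0 + l (Matrix.single 0 1 1, 0) * η 0 1 +
      l (Matrix.single 1 0 1, 0) * η 1 0 + l (Matrix.single 1 1 1, 0) * η 1 1 +
      l (0, 1) * t := by
    intro η t
    have : ((η, t) : Mat2 × ℝ) = η 0 0 • (Matrix.single 0 0 1, 0) +
      η 0 1 • (Matrix.single 0 1 1, 0) + η 1 0 • (Matrix.single 1 0 1, 0) +
      η 1 1 • (Matrix.single 1 1 1, 0) + t • (0, 1) := by
      ext i j
      · fin_cases i <;> fin_cases j <;> simp [Matrix.single]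
      · simp
    conv_lhs => rw [this]
    simp only [map_add, map_smul, smul_eq_mul]
    ring
  obtain ⟨η, hη, hle⟩ := h (l (Matrix.single 0 0 1, 0)) (l (Matrix.single 0 1 1, 0))
    (l (Matrix.single 1 0 1, 0)) (l (Matrix.single 1 1 1, 0)) (l (0, 1))
  rw [← key, ← key] at hle
  have := hl (η, η.det) (by rw [Set.mem_ofPred_eq, ← hfg]; exact hE η hη)
  linarith

/-- a matrix with prescribed conformal coordinates -/
lemma exists_mat (e f e' f' U V : ℝ) (hU : 0 ≤ U) (hV : 0 ≤ V) (he : e ^ 2 + f ^ 2 = 1)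
    (he' : e' ^ 2 + f' ^ 2 = 1) : ∃ η : Mat2, zn η = U ∧ wn η = V ∧
    (η 0 0 + η 1 1) / 2 = U * e ∧ (η 1 0 - η 0 1) / 2 = U * f ∧
    (η 0 0 - η 1 1) / 2 = V * e' ∧ (η 1 0 + η 0 1) / 2 = V * f' := by
  have h1 : ∀ p q r t : ℝ, (!![p, q; r, t] : Mat2) 0 0 = p ∧ (!![p, q; r, t] : Mat2) 0 1 = q ∧
    (!![p, q; r, t] : Mat2) 1 0 = r ∧ (!![p, q; r, t] : Mat2) 1 1 = t := by
    intros; simp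
  obtain ⟨a1, a2, a3, a4⟩ := h1 (U * e + V * e') (V * f' - U * f) (U * f + V * f') (U * e - V * e')
  refine ⟨!![U * e + V * e', V * f' - U * f; U * f + V * f', U * e - V * e'], ?_⟩
  rw [zn, wn, a1, a2, a3, a4]
  refine ⟨nrm_eq hU ?_, nrm_eq hV ?_, by ring, by ring, by ring, by ring⟩
  · linear_combination U ^ 2 * he
  · linear_combination V ^ 2 * he'

lemma core_zw (K : Set (ℝ × ℝ)) (M u v s p q : ℝ)
    (hK : ∀ p ∈ K, 0 < p.1 ∧ p.1 ≤ p.2) (hM : ∃ p ∈ K, p.2 = M) (hM' : ∀ p ∈ K, p.2 ≤ M)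
    (hu : 0 ≤ u) (hv : 0 ≤ v) (hp : 0 ≤ p) (hq : 0 ≤ q) (huv : v ≤ u)
    (H : ∀ θ, 0 ≤ θ → θ ≤ M → ∃ p ∈ K,
      (u - v) * (u + v) + θ * ((u + v) - (u - v)) ≤ p.1 * p.2 + θ * (p.2 - p.1)) :
    ∃ U V : ℝ, 0 ≤ U ∧ 0 ≤ V ∧ (|U - V|, U + V) ∈ K ∧
      p * u + q * v + s * (u ^ 2 - v ^ 2) ≤ p * U + q * V + s * (U ^ 2 - V ^ 2) := by
  obtain ⟨⟨a, b⟩, hab, σ, hσ, h⟩ := core_all K M (u - v) (u + v) s ((p - q) / 2) ((p + q) / 2)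
    hK hM hM' (by linarith) (by linarith) H (by linarith) (by linarith)
  obtain ⟨h1, h2⟩ := hK _ hab
  simp only at h1 h2 h
  rcases hσ with rfl | rfl
  · refine ⟨(b + a) / 2, (b - a) / 2, by linarith, by linarith, ?_, by linarith⟩
    rw [abs_of_nonneg (by linarith)]
    convert hab using 2 <;> ring
  · refine ⟨(b - a) / 2, (b + a) / 2, by linarith, by linarith, ?_, by linarith⟩
    rw [abs_of_nonpos (by linarith)]
    convert hab using 2 <;> ring

lemma closed_sub (K : Set (ℝ × ℝ)) (M : ℝ)
    (hK : ∀ p ∈ K, 0 < p.1 ∧ p.1 ≤ p.2) (hM : ∃ p ∈ K, p.2 = M) (hM' : ∀ p ∈ K, p.2 ≤ M)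
    (ξ : Mat2) (H : ∀ θ, 0 ≤ θ → θ ≤ M → ∃ p ∈ K, ftheta θ (lam1 ξ, lam2 ξ) ≤ ftheta θ p) :
    ξ ∈ pcHull {ξ | (lam1 ξ, lam2 ξ) ∈ K} := by
  apply lin_hull
  intro a b c d s
  have hz := zn_nonneg ξ
  have hw := wn_nonneg ξ
  obtain ⟨e, f, he, hef⟩ := nrm_unit (a + d) (c - b)
  obtain ⟨e', f', he', hef'⟩ := nrm_unit (a - d) (c + b)
  have hp := nrm_nonneg (a + d) (c - b)
  have hq := nrm_nonneg (a - d) (c + b)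
  have key : ∃ U V : ℝ, 0 ≤ U ∧ 0 ≤ V ∧ (|U - V|, U + V) ∈ K ∧
      nrm (a + d) (c - b) * zn ξ + nrm (a - d) (c + b) * wn ξ + s * (zn ξ ^ 2 - wn ξ ^ 2) ≤
      nrm (a + d) (c - b) * U + nrm (a - d) (c + b) * V + s * (U ^ 2 - V ^ 2) := by
    rw [(lam_zw ξ).1, (lam_zw ξ).2] at H
    simp only [ftheta] at H
    rcases le_total (wn ξ) (zn ξ) with h | h
    · rw [abs_of_nonneg (by linarith)] at H
      exact core_zw K M _ _ s _ _ hK hM hM' hz hw hp hq h H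
    · rw [abs_of_nonpos (by linarith), neg_sub, add_comm] at H
      obtain ⟨V, U, hV, hU, h1, h2⟩ := core_zw K M _ _ (-s) _ _ hK hM hM' hw hz hq hp h H
      refine ⟨U, V, hU, hV, ?_, by linarith⟩
      rwa [abs_sub_comm, add_comm]
  obtain ⟨U, V, hU, hV, hUV, hle⟩ := key
  obtain ⟨η, h1, h2, h3, h4, h5, h6⟩ := exists_mat e f e' f' U V hU hV he he'
  refine ⟨η, ?_, ?_⟩
  · rw [Set.mem_ofPred_eq, (lam_zw η).1, (lam_zw η).2, h1, h2]; exact hUV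
  · have c1 := nrm_cs (a + d) (c - b) ((ξ 0 0 + ξ 1 1) / 2) ((ξ 1 0 - ξ 0 1) / 2)
    have c2 := nrm_cs (a - d) (c + b) ((ξ 0 0 - ξ 1 1) / 2) ((ξ 1 0 + ξ 0 1) / 2)
    have c3 : a * η 0 0 + b * η 0 1 + c * η 1 0 + d * η 1 1 =
      nrm (a + d) (c - b) * U + nrm (a - d) (c + b) * V := by
      rw [← hef, ← hef']
      linear_combination (a + d) * h3 + (c - b) * h4 + (a - d) * h5 + (c + b) * h6
    rw [det_zw, det_zw, c3, h1, h2]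
    change _ ≤ nrm (a + d) (c - b) * zn ξ at c1
    change _ ≤ nrm (a - d) (c + b) * wn ξ at c2
    linarith

lemma aux_bound (θ M c U V : ℝ) (h0 : 0 ≤ θ) (hM : θ ≤ M) (hc : θ * M ≤ c) (hV : 0 ≤ V)
    (hU : 0 ≤ U) (h : |U - V| * (U + V) + θ * (U + V - |U - V|) ≤ c) :
    U ^ 2 - V ^ 2 + 2 * θ * V ≤ c := by
  rcases le_total V U with hVU | hVU
  · rw [abs_of_nonneg (by linarith)] at h; linarith
  · rw [abs_of_nonpos (by linarith)] at h
    rcases le_total θ (U + V) with h1 | h1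
    · nlinarith
    · have : θ * θ ≤ θ * M := mul_le_mul_of_nonneg_left hM h0
      nlinarith [sq_nonneg (θ - V)]

lemma pc_le (K : Set (ℝ × ℝ)) (M θ c : ℝ) (h0 : 0 ≤ θ) (hM : θ ≤ M) (hc : θ * M ≤ c)
    (hK : ∀ p ∈ K, ftheta θ p ≤ c) (ξ : Mat2)
    (hξ : ξ ∈ pcHull {ξ | (lam1 ξ, lam2 ξ) ∈ K}) : ftheta θ (lam1 ξ, lam2 ξ) ≤ c := by
  have hz := zn_nonneg ξ
  have hw := wn_nonneg ξ
  rw [(lam_zw ξ).1, (lam_zw ξ).2]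
  simp only [ftheta]
  have hη : ∀ η ∈ {ξ : Mat2 | (lam1 ξ, lam2 ξ) ∈ K},
      |zn η - wn η| * (zn η + wn η) + θ * (zn η + wn η - |zn η - wn η|) ≤ c := by
    intro η hη
    have := hK _ hη
    rwa [(lam_zw η).1, (lam_zw η).2] at this
  rcases le_total (wn ξ) (zn ξ) with h | h
  · rw [abs_of_nonneg (by linarith)]
    obtain ⟨e, f, he, hef⟩ := nrm_unit ((ξ 0 0 - ξ 1 1) / 2) ((ξ 1 0 + ξ 0 1) / 2)
    change _ = wn ξ at hef
    have := hull_lin _ ξ hξ (θ * e) (θ * f) (θ * f) (-(θ * e)) 1 c (by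
      intro η hηE
      have h1 := aux_bound θ M c (zn η) (wn η) h0 hM hc (wn_nonneg _) (zn_nonneg _) (hη η hηE)
      have h2 := nrm_cs ((η 0 0 - η 1 1) / 2) ((η 1 0 + η 0 1) / 2) e f
      rw [nrm_eq zero_le_one (by rw [he]; norm_num : e ^ 2 + f ^ 2 = 1 ^ 2), mul_one] at h2
      change _ ≤ wn η at h2
      have h3 := mul_le_mul_of_nonneg_left h2 h0
      rw [det_zw]
      nlinarith)
    rw [det_zw] at this
    have h4 := congrArg (fun x => θ * x) hef
    nlinarith
  · rw [abs_of_nonpos (by linarith)]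
    obtain ⟨e, f, he, hef⟩ := nrm_unit ((ξ 0 0 + ξ 1 1) / 2) ((ξ 1 0 - ξ 0 1) / 2)
    change _ = zn ξ at hef
    have := hull_lin _ ξ hξ (θ * e) (-(θ * f)) (θ * f) (θ * e) (-1) c (by
      intro η hηE
      have h1 := aux_bound θ M c (wn η) (zn η) h0 hM hc (zn_nonneg _) (wn_nonneg _) (by
        have := hη η hηE
        rwa [abs_sub_comm, add_comm (wn η)])
      have h2 := nrm_cs ((η 0 0 + η 1 1) / 2) ((η 1 0 - η 0 1) / 2) e f
      rw [nrm_eq zero_le_one (by rw [he]; norm_num : e ^ 2 + f ^ 2 = 1 ^ 2), mul_one] at h2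
      change _ ≤ zn η at h2
      have h3 := mul_le_mul_of_nonneg_left h2 h0
      rw [det_zw]
      nlinarith)
    rw [det_zw] at this
    have h4 := congrArg (fun x => θ * x) hef
    nlinarith

lemma zw_smul (t : ℝ) (ht : 0 ≤ t) (ξ : Mat2) : zn (t • ξ) = t * zn ξ ∧ wn (t • ξ) = t * wn ξ := by
  constructor
  · apply nrm_eq (mul_nonneg ht (zn_nonneg _))
    rw [mul_pow, zn, nrm_sq]; simp only [Matrix.smul_apply, smul_eq_mul]; ring
  · apply nrm_eq (mul_nonneg ht (wn_nonneg _))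
    rw [mul_pow, wn, nrm_sq]; simp only [Matrix.smul_apply, smul_eq_mul]; ring

lemma continuous_zn : Continuous zn := by
  unfold zn nrm; fun_prop
lemma continuous_wn : Continuous wn := by
  unfold wn nrm; fun_prop

/-- characterization of `int E^{pc}` via the functions `f_θ`. -/
theorem interior_pcHull_characterization (K : Set (ℝ × ℝ)) (hKc : IsCompact K)
    (hKne : K.Nonempty)
    (hKsub : K ⊆ {p : ℝ × ℝ | 0 < p.1 ∧ p.1 ≤ p.2})
    (E : Set (Matrix (Fin 2) (Fin 2) ℝ)) (hE : E = {ξ | (lam1 ξ, lam2 ξ) ∈ K}) :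
    interior (pcHull E) = {ξ | ∀ θ ∈ Set.Icc (0 : ℝ) (sSup (Prod.snd '' K)),
      ftheta θ (lam1 ξ, lam2 ξ) < sSup (ftheta θ '' K)} := by
  subst hE
  have hK : ∀ p ∈ K, 0 < p.1 ∧ p.1 ≤ p.2 := fun p hp => hKsub hp
  obtain ⟨p0, hp0, hp0M, hM'⟩ := hKc.exists_sSup_image_eq_and_ge hKne continuous_snd.continuousOn
  set M := sSup (Prod.snd '' K) with hMdef
  rw [← hp0M] at hM'
  have hcf : Continuous (fun q : ℝ × (ℝ × ℝ) => ftheta q.1 q.2) := by unfold ftheta; fun_prop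
  have hmax : ∀ θ, ∃ p ∈ K, sSup (ftheta θ '' K) = ftheta θ p ∧ ∀ q ∈ K, ftheta θ q ≤ ftheta θ p :=
    fun θ => hKc.exists_sSup_image_eq_and_ge hKne
      (hcf.comp (Continuous.prodMk_right θ)).continuousOn
  apply Set.Subset.antisymm
  · intro ξ hξ θ hθ
    obtain ⟨p, hp, hpe, hpm⟩ := hmax θ
    rw [hpe]
    have hp0' := hK p0 hp0
    have hc : θ * M ≤ ftheta θ p := by
      refine le_trans ?_ (hpm p0 hp0)
      rw [ftheta, ← hp0M]
      nlinarith [mul_le_mul_of_nonneg_right hθ.2 hp0'.1.le]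
    have hcpos : 0 < ftheta θ p := by
      have := hK p hp
      rw [ftheta]
      nlinarith [mul_pos this.1 (this.1.trans_le this.2), mul_nonneg hθ.1 (sub_nonneg.2 this.2)]
    have hev : ∀ᶠ t : ℝ in nhds 1, t • ξ ∈ pcHull {ξ : Mat2 | (lam1 ξ, lam2 ξ) ∈ K} := by
      have hct : Continuous (fun t : ℝ => t • ξ) := by fun_prop
      apply hct.continuousAt
      simp only [one_smul]
      exact mem_interior_iff_mem_nhds.1 hξ
    have hev2 : ∀ᶠ t : ℝ in nhdsWithin 1 (Set.Ioi 1),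
        t • ξ ∈ pcHull {ξ : Mat2 | (lam1 ξ, lam2 ξ) ∈ K} := hev.filter_mono nhdsWithin_le_nhds
    obtain ⟨t, ht, ht1⟩ := (hev2.and self_mem_nhdsWithin).exists
    have ht1 : 1 < t := ht1
    have hle := pc_le K M θ _ hθ.1 hθ.2 hc hpm _ ht
    rw [(lam_zw _).1, (lam_zw _).2] at hle ⊢
    rw [(zw_smul t (by linarith) ξ).1, (zw_smul t (by linarith) ξ).2, ← mul_sub, abs_mul,
      abs_of_pos (by linarith : 0 < t)] at hle
    have hz := zn_nonneg ξ
    have hw := wn_nonneg ξ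
    have ha := abs_nonneg (zn ξ - wn ξ)
    generalize |zn ξ - wn ξ| = x at *
    by_contra hcon
    push Not at hcon
    generalize ftheta θ p = c at *
    simp only [ftheta] at hle hcon
    have e1 : 0 ≤ x * (zn ξ + wn ξ) := mul_nonneg ha (by linarith)
    have e2 : t * c ≤ c := by
      have := mul_le_mul_of_nonneg_left hcon (by linarith : 0 ≤ t)
      nlinarith [mul_nonneg (mul_nonneg (by linarith : 0 ≤ t) (by linarith : 0 ≤ t - 1)) e1]
    nlinarith
  · apply interior_maximal
    · intro ξ hξ
      apply closed_sub K M hK ⟨p0, hp0, hp0M.symm⟩ hM'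
      intro θ h0 h1
      obtain ⟨p, hp, hpe, hpm⟩ := hmax θ
      exact ⟨p, hp, hpe ▸ (hξ θ ⟨h0, h1⟩).le⟩
    · have hS : Continuous (fun θ => sSup (ftheta θ '' K)) := hKc.continuous_sSup hcf
      rw [isOpen_iff_mem_nhds]
      intro ξ hξ
      have := (isCompact_Icc (a := (0 : ℝ)) (b := M)).eventually_forall_of_forall_eventually
        (x₀ := ξ) (P := fun ξ θ => ftheta θ (lam1 ξ, lam2 ξ) < sSup (ftheta θ '' K)) (by
          intro θ hθ
          have hcc : Continuous (fun z : Mat2 × ℝ => ftheta z.2 (lam1 z.1, lam2 z.1)) := by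
            have hz := continuous_zn
            have hw := continuous_wn
            simp only [fun ξ => (lam_zw ξ).1, fun ξ => (lam_zw ξ).2, ftheta]
            fun_prop
          exact (isOpen_lt hcc (hS.comp continuous_snd)).mem_nhds (hξ θ hθ))
      exact this
end

section
/- Let K ⊂ {(x,y) ∈ ℝ² : 0 < x ≤ y} be a compact set, let E := {ξ ∈ ℝ^{2×2} : (λ₁(ξ), λ₂(ξ)) ∈ K}, and let ξ ∈ int(E^{rc}). Then there exists a sequence of open sets (U_n)_{n≥1} which is an in-approximation of E and such that ξ ∈ U_1. -/
open scoped BigOperators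

abbrev Mat := Matrix (Fin 2) (Fin 2) ℝ

theorem aux_frobSq (ξ : Mat) :
    frobSq ξ = ξ 0 0 ^ 2 + ξ 0 1 ^ 2 + ξ 1 0 ^ 2 + ξ 1 1 ^ 2 := by
  simp only [frobSq, Fin.sum_univ_two]; ring

theorem aux_frobSq_cont : Continuous frobSq := by
  unfold frobSq
  fun_prop

theorem aux_frobNorm_cont : Continuous frobNorm := by
  unfold frobNorm
  exact Real.continuous_sqrt.comp aux_frobSq_cont

theorem aux_det_cont : Continuous (fun ξ : Mat => ξ.det) := continuous_id.matrix_det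

theorem aux_lam1_cont : Continuous lam1 := by
  unfold lam1
  have h1 := aux_frobSq_cont
  have h2 := aux_det_cont
  fun_prop

theorem aux_lam2_cont : Continuous lam2 := by
  unfold lam2
  have h1 := aux_frobSq_cont
  have h2 := aux_det_cont
  fun_prop

theorem aux_frob_det (ξ : Mat) : 0 ≤ frobSq ξ - 2 * |ξ.det| := by
  rw [aux_frobSq, Matrix.det_fin_two]
  have : |ξ 0 0 * ξ 1 1 - ξ 0 1 * ξ 1 0| ≤ (ξ 0 0 ^ 2 + ξ 0 1 ^ 2 + ξ 1 0 ^ 2 + ξ 1 1 ^ 2) / 2 := by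
    rw [abs_le]
    constructor <;> nlinarith [sq_nonneg (ξ 0 0 - ξ 1 1), sq_nonneg (ξ 0 0 + ξ 1 1),
      sq_nonneg (ξ 0 1 - ξ 1 0), sq_nonneg (ξ 0 1 + ξ 1 0)]
  linarith

theorem aux_lam_sq (ξ : Mat) : lam1 ξ ^ 2 + lam2 ξ ^ 2 = frobSq ξ := by
  have h := aux_frob_det ξ
  have h' : 0 ≤ frobSq ξ + 2 * |ξ.det| := by linarith [abs_nonneg ξ.det]
  have e1 := Real.sq_sqrt h
  have e2 := Real.sq_sqrt h'
  unfold lam1 lam2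
  nlinarith

theorem aux_lam_of {ξ : Mat} {x y : ℝ} (hx : 0 ≤ x) (hxy : x ≤ y)
    (h1 : frobSq ξ = x ^ 2 + y ^ 2) (h2 : |ξ.det| = x * y) : lam1 ξ = x ∧ lam2 ξ = y := by
  have e1 : Real.sqrt (frobSq ξ + 2 * |ξ.det|) = x + y := by
    rw [h1, h2, show x ^ 2 + y ^ 2 + 2 * (x * y) = (x + y) ^ 2 by ring]
    exact Real.sqrt_sq (by linarith)
  have e2 : Real.sqrt (frobSq ξ - 2 * |ξ.det|) = y - x := by
    rw [h1, h2, show x ^ 2 + y ^ 2 - 2 * (x * y) = (y - x) ^ 2 by ring]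
    exact Real.sqrt_sq (by linarith)
  unfold lam1 lam2
  rw [e1, e2]
  constructor <;> ring

theorem aux_unit (p q : ℝ) : ∃ u v : ℝ, u ^ 2 + v ^ 2 = 1 ∧
    p = Real.sqrt (p ^ 2 + q ^ 2) * u ∧ q = Real.sqrt (p ^ 2 + q ^ 2) * v := by
  by_cases h : Real.sqrt (p ^ 2 + q ^ 2) = 0
  · have h0 : p ^ 2 + q ^ 2 = 0 := (Real.sqrt_eq_zero (by positivity)).1 h
    refine ⟨1, 0, by norm_num, ?_, ?_⟩ <;> rw [h] <;> nlinarith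
  · refine ⟨p / Real.sqrt (p ^ 2 + q ^ 2), q / Real.sqrt (p ^ 2 + q ^ 2), ?_, ?_, ?_⟩
    · have := Real.sq_sqrt (show 0 ≤ p ^ 2 + q ^ 2 by positivity)
      field_simp
      linarith
    · field_simp
    · field_simp

theorem aux_svd (ζ : Mat) : ∃ (A B : Mat) (a b : ℝ), ζ = a • A + b • B ∧ |a| ≤ b ∧
    (∀ s t : ℝ, frobSq (s • A + t • B) = s ^ 2 + t ^ 2) ∧
    (∀ s t : ℝ, (s • A + t • B).det = s * t) := by
  obtain ⟨u1, u2, hu, hp, hq⟩ := aux_unit ((ζ 0 0 + ζ 1 1) / 2) ((ζ 1 0 - ζ 0 1) / 2)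
  obtain ⟨v1, v2, hv, hr, ht⟩ := aux_unit ((ζ 0 0 - ζ 1 1) / 2) ((ζ 1 0 + ζ 0 1) / 2)
  have hz := Real.sqrt_nonneg (((ζ 0 0 + ζ 1 1) / 2) ^ 2 + ((ζ 1 0 - ζ 0 1) / 2) ^ 2)
  have hw := Real.sqrt_nonneg (((ζ 0 0 - ζ 1 1) / 2) ^ 2 + ((ζ 1 0 + ζ 0 1) / 2) ^ 2)
  generalize Real.sqrt (((ζ 0 0 + ζ 1 1) / 2) ^ 2 + ((ζ 1 0 - ζ 0 1) / 2) ^ 2) = z at *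
  generalize Real.sqrt (((ζ 0 0 - ζ 1 1) / 2) ^ 2 + ((ζ 1 0 + ζ 0 1) / 2) ^ 2) = w at *
  refine ⟨!![(u1 - v1) / 2, (-u2 - v2) / 2; (u2 - v2) / 2, (u1 + v1) / 2],
    !![(u1 + v1) / 2, (-u2 + v2) / 2; (u2 + v2) / 2, (u1 - v1) / 2], z - w, z + w, ?_, ?_, ?_, ?_⟩
  · ext i j
    fin_cases i <;> fin_cases j <;> simp <;> linarith
  · rw [abs_le]; constructor <;> linarith
  · intro s t
    rw [aux_frobSq]
    simp
    linear_combination ((s + t) ^ 2 / 2) * hu + ((s - t) ^ 2 / 2) * hv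
  · intro s t
    rw [Matrix.det_fin_two]
    simp
    linear_combination ((s + t) ^ 2 / 4) * hu - ((s - t) ^ 2 / 4) * hv

theorem aux_rank_one {M : Mat} (h0 : M ≠ 0) (hd : M.det = 0) : M.rank = 1 := by
  have h1 : M.rank ≠ 0 := by
    intro h
    have h' : Matrix.toLin' M = 0 := by
      rw [← LinearMap.range_eq_bot, ← Submodule.finrank_eq_zero (R := ℝ)]
      exact h
    exact h0 (by simpa using h')
  have h2 : M.rank ≤ 2 := by simpa using M.rank_le_width
  have h3 : M.rank ≠ 2 := by
    intro h
    have hu : IsUnit M := by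
      rw [← Matrix.linearIndependent_rows_iff_isUnit, linearIndependent_iff_card_eq_finrank_span]
      rw [Set.finrank, ← Matrix.rank_eq_finrank_span_row, h]
      simp
    rw [Matrix.isUnit_iff_isUnit_det, hd] at hu
    simp at hu
  omega

/-- Convexity along a rank-one line preserves the constraint `f ≤ 0`. -/
theorem aux_seg {f : Mat → ℝ} (hf : RankOneConvex f) {A C : Mat} (hA : A ≠ 0) (hd : A.det = 0)
    {a x : ℝ} (hx : 0 < x) (ha : |a| ≤ x) (h1 : f (x • A + C) ≤ 0) (h2 : f ((-x) • A + C) ≤ 0) :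
    f (a • A + C) ≤ 0 := by
  obtain ⟨ha1, ha2⟩ := abs_le.1 ha
  have key := hf (x • A + C) ((-x) • A + C) ((a + x) / (2 * x))
    ⟨by apply div_nonneg <;> linarith, by rw [div_le_one (by linarith)]; linarith⟩ (by
      have : x • A + C - ((-x) • A + C) = (2 * x) • A := by module
      rw [this]
      apply aux_rank_one
      · exact smul_ne_zero (by linarith) hA
      · rw [Matrix.det_smul, hd, mul_zero])
  have e : ((a + x) / (2 * x)) • (x • A + C) + (1 - (a + x) / (2 * x)) • ((-x) • A + C)
      = a • A + C := by
    have : a = ((a + x) / (2 * x)) * x - (1 - (a + x) / (2 * x)) * x := by field_simp; ring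
    conv_rhs => rw [this]
    module
  rw [e] at key
  have t0 : 0 ≤ (a + x) / (2 * x) := by apply div_nonneg <;> linarith
  have t1 : (a + x) / (2 * x) ≤ 1 := by rw [div_le_one (by linarith)]; linarith
  nlinarith [mul_nonneg t0 (neg_nonneg.2 h1), mul_nonneg (sub_nonneg.2 t1) (neg_nonneg.2 h2)]

/-- The rank one convex hull of an orbit contains a box in the singular values. -/
theorem aux_box {K : Set (ℝ × ℝ)} {x y : ℝ} (hK : (x, y) ∈ K) (hx : 0 < x) (hxy : x ≤ y)
    {ζ : Mat} (h1 : lam1 ζ ≤ x) (h2 : lam2 ζ ≤ y) : ζ ∈ rcHull {ξ | (lam1 ξ, lam2 ξ) ∈ K} := by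
  obtain ⟨A, B, a, b, rfl, hab, hfr, hdet⟩ := aux_svd ζ
  have hb : 0 ≤ b := (abs_nonneg a).trans hab
  obtain ⟨l1, l2⟩ := aux_lam_of (ξ := a • A + b • B) (abs_nonneg a) hab
    (by rw [hfr, sq_abs]) (by rw [hdet, abs_mul, abs_of_nonneg hb])
  rw [l1] at h1
  rw [l2] at h2
  have hA0 : A.det = 0 := by simpa using hdet 1 0
  have hB0 : B.det = 0 := by simpa using hdet 0 1
  have hA : A ≠ 0 := by
    rintro rfl
    have := hfr 1 0
    rw [aux_frobSq] at this
    simp at this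
  have hB : B ≠ 0 := by
    rintro rfl
    have := hfr 0 1
    rw [aux_frobSq] at this
    simp at this
  intro f hf hE
  have hy : 0 < y := hx.trans_le hxy
  have corner : ∀ s t : ℝ, |s| = x → |t| = y → f (s • A + t • B) ≤ 0 := by
    intro s t hs ht
    apply hE
    obtain ⟨m1, m2⟩ := aux_lam_of (ξ := s • A + t • B) hx.le hxy
      (by rw [hfr, ← hs, ← ht, sq_abs, sq_abs]) (by rw [hdet, abs_mul, hs, ht])
    simpa [m1, m2] using hK
  have ax : |x| = x := abs_of_pos hx
  have ay : |y| = y := abs_of_pos hy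
  have edge : ∀ s : ℝ, |s| = x → f (s • A + b • B) ≤ 0 := by
    intro s hs
    rw [add_comm]
    apply aux_seg hf hB hB0 hy (by rwa [abs_of_nonneg hb])
    · rw [add_comm]; exact corner s y hs ay
    · rw [add_comm]; exact corner s (-y) hs (by rw [abs_neg, ay])
  exact aux_seg hf hA hA0 hx h1 (edge x ax) (edge (-x) (by rw [abs_neg, ax]))

theorem aux_roc_smul {f : Mat → ℝ} (hf : RankOneConvex f) {s : ℝ} (hs : s ≠ 0) :
    RankOneConvex (fun ξ => f (s • ξ)) := by
  intro ξ η t ht hr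
  have := hf (s • ξ) (s • η) t ht (by
    rw [← smul_sub]
    apply aux_rank_one
    · apply smul_ne_zero hs
      intro h
      rw [h] at hr
      simp at hr
    · rw [Matrix.det_smul]
      have : (ξ - η).det = 0 := by
        by_contra h
        have := Matrix.rank_of_isUnit (ξ - η) ((Matrix.isUnit_iff_isUnit_det _).2 (isUnit_iff_ne_zero.2 h))
        rw [hr] at this
        simp at this
      rw [this, mul_zero])
  rw [smul_comm t s, smul_comm (1 - t) s, ← smul_add] at this
  exact this

theorem aux_rc_smul {E : Set Mat} {s : ℝ} (hs : s ≠ 0) {η : Mat} (h : η ∈ rcHull E) :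
    s • η ∈ rcHull ((fun ζ => s • ζ) '' E) := by
  intro f hf hE
  exact h _ (aux_roc_smul hf hs) (fun ζ hζ => hE _ ⟨ζ, hζ, rfl⟩)

theorem aux_int_smul {E : Set Mat} {s : ℝ} (hs : s ≠ 0) {η : Mat}
    (h : s⁻¹ • η ∈ interior (rcHull E)) :
    η ∈ interior (rcHull ((fun ζ => s • ζ) '' E)) := by
  rw [mem_interior]
  refine ⟨(fun ζ : Mat => s⁻¹ • ζ) ⁻¹' interior (rcHull E), ?_,
    isOpen_interior.preimage (continuous_const_smul _), h⟩
  intro ζ hζ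
  have := aux_rc_smul hs (interior_subset hζ)
  simpa [smul_smul, hs] using this

theorem aux_frobSq_smul (c : ℝ) (η : Mat) : frobSq (c • η) = c ^ 2 * frobSq η := by
  simp only [aux_frobSq, Matrix.smul_apply, smul_eq_mul]; ring

theorem aux_frobNorm_smul (c : ℝ) (η : Mat) : frobNorm (c • η) = |c| * frobNorm η := by
  rw [frobNorm, aux_frobSq_smul, Real.sqrt_mul (sq_nonneg _), Real.sqrt_sq_eq_abs, frobNorm]

theorem aux_scaled_interior {K : Set (ℝ × ℝ)} (hKsub : K ⊆ {p : ℝ × ℝ | 0 < p.1 ∧ p.1 ≤ p.2})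
    {c : ℝ} (hc : 0 < c) (hc1 : c < 1) {η : Mat} (hη : (lam1 η, lam2 η) ∈ K) :
    c • η ∈ interior (rcHull {ξ | (lam1 ξ, lam2 ξ) ∈ K}) := by
  obtain ⟨hx, hxy⟩ := hKsub hη
  simp only at hx hxy
  have hd : |η.det| = lam1 η * lam2 η := by
    have h := aux_frob_det η
    have h' : 0 ≤ frobSq η + 2 * |η.det| := by linarith [abs_nonneg η.det]
    have e1 := Real.sq_sqrt h
    have e2 := Real.sq_sqrt h'
    unfold lam1 lam2
    nlinarith
  obtain ⟨l1, l2⟩ := aux_lam_of (ξ := c • η) (x := c * lam1 η) (y := c * lam2 η) (by positivity)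
    (by gcongr) (by rw [aux_frobSq_smul, ← aux_lam_sq]; ring)
    (by rw [Matrix.det_smul, abs_mul, hd]; simp [abs_of_pos hc]; ring)
  rw [mem_interior]
  refine ⟨{ζ | lam1 ζ < lam1 η ∧ lam2 ζ < lam2 η}, ?_, ?_, ?_⟩
  · rintro ζ ⟨h1, h2⟩
    exact aux_box hη hx hxy h1.le h2.le
  · exact (isOpen_lt aux_lam1_cont continuous_const).inter
      (isOpen_lt aux_lam2_cont continuous_const)
  · constructor
    · rw [l1]; nlinarith
    · rw [l2]; nlinarith

theorem aux_compact {K : Set (ℝ × ℝ)} (hKc : IsCompact K) :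
    IsCompact {ξ : Mat | (lam1 ξ, lam2 ξ) ∈ K} := by
  have hcl : IsClosed {ξ : Mat | (lam1 ξ, lam2 ξ) ∈ K} :=
    hKc.isClosed.preimage (aux_lam1_cont.prodMk aux_lam2_cont)
  obtain ⟨C, hC⟩ := hKc.exists_bound_of_continuousOn (f := fun p : ℝ × ℝ => p.1 ^ 2 + p.2 ^ 2)
    (by fun_prop)
  have hcomp : IsCompact (Set.univ.pi fun _ : Fin 2 => Set.univ.pi fun _ : Fin 2 =>
      Set.Icc (-(C + 1)) (C + 1) : Set (Fin 2 → Fin 2 → ℝ)) :=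
    isCompact_univ_pi fun _ => isCompact_univ_pi fun _ => isCompact_Icc
  refine IsCompact.of_isClosed_subset (X := Mat) hcomp hcl ?_
  intro ξ hξ
  have h := hC _ hξ
  simp only [Real.norm_eq_abs] at h
  rw [aux_lam_sq, aux_frobSq] at h
  have h := (abs_le.1 h).2
  intro i _ j _
  have hij : ξ i j ^ 2 ≤ C := by
    fin_cases i <;> fin_cases j <;> simp <;>
      nlinarith [sq_nonneg (ξ 0 0), sq_nonneg (ξ 0 1), sq_nonneg (ξ 1 0), sq_nonneg (ξ 1 1)]
  constructor <;> nlinarith [sq_nonneg (ξ i j)]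

/-- if `ξ ∈ int E^{rc}` then there is an in-approximation of `E` whose first
set contains `ξ`. -/
theorem exists_inApproximation_mem_first (K : Set (ℝ × ℝ)) (hKc : IsCompact K)
    (hKsub : K ⊆ {p : ℝ × ℝ | 0 < p.1 ∧ p.1 ≤ p.2})
    (E : Set (Matrix (Fin 2) (Fin 2) ℝ)) (hE : E = {ξ | (lam1 ξ, lam2 ξ) ∈ K})
    (ξ : Matrix (Fin 2) (Fin 2) ℝ) (hξ : ξ ∈ interior (rcHull E)) :
    ∃ U : ℕ → Set (Matrix (Fin 2) (Fin 2) ℝ),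
      (∀ n, IsOpen (U n)) ∧
      (∀ n, U n ⊆ rcHullOpen (U (n + 1))) ∧
      (∀ r : ℝ, 0 < r → ∃ N : ℕ, ∀ n ≥ N, ∀ η ∈ U n, distE η E ≤ r) ∧
      ξ ∈ U 0 := by
  subst hE
  set E : Set Mat := {ξ | (lam1 ξ, lam2 ξ) ∈ K} with hEdef
  have hEc : IsCompact E := aux_compact hKc
  obtain ⟨C, hC⟩ := hEc.exists_bound_of_continuousOn aux_frobNorm_cont.continuousOn
  have hC' : ∀ η ∈ E, frobNorm η ≤ |C| := fun η hη =>
    (le_abs_self _).trans ((hC η hη).trans (le_abs_self _))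
  -- choice of scales
  have hcont : Filter.Tendsto (fun s : ℝ => s⁻¹ • ξ) (nhds 1) (nhds ξ) := by
    have h1 : Filter.Tendsto (fun s : ℝ => s⁻¹) (nhds 1) (nhds 1) := by
      simpa using (tendsto_inv₀ (one_ne_zero : (1 : ℝ) ≠ 0))
    simpa using h1.smul_const ξ
  have hev := hcont.eventually (isOpen_interior.mem_nhds hξ)
  obtain ⟨δ, hδ, hball⟩ := Metric.eventually_nhds_iff.1 hev
  set d : ℝ := min δ (1 / 2) with hd
  have hd0 : 0 < d := lt_min hδ (by norm_num)
  have hd1 : d ≤ 1 / 2 := min_le_right _ _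
  have hd2 : d ≤ δ := min_le_left _ _
  set s : ℕ → ℝ := fun n => 1 - d / (n + 2) with hs
  have hfrac : ∀ n : ℕ, 0 < d / ((n : ℝ) + 2) ∧ d / ((n : ℝ) + 2) < d := by
    intro n
    have hn : (0 : ℝ) ≤ n := Nat.cast_nonneg n
    refine ⟨by positivity, ?_⟩
    rw [div_lt_iff₀ (by positivity)]
    nlinarith
  have hs0 : ∀ n, 0 < s n := fun n => by
    have := hfrac n
    simp only [hs]; linarith
  have hsmono : ∀ n, s n < s (n + 1) := fun n => by
    simp only [hs]
    have hn : (0 : ℝ) ≤ n := Nat.cast_nonneg n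
    have : d / (((n + 1 : ℕ) : ℝ) + 2) < d / ((n : ℝ) + 2) := by
      apply div_lt_div_of_pos_left hd0 (by positivity)
      push_cast; linarith
    linarith
  have hsub : ∀ n, ∀ η ∈ E, s n • η ∈ interior (rcHull ((fun ζ => s (n + 1) • ζ) '' E)) := by
    intro n η hη
    apply aux_int_smul (hs0 _).ne'
    rw [smul_smul]
    refine aux_scaled_interior hKsub ?_ ?_ hη
    · exact mul_pos (inv_pos.2 (hs0 _)) (hs0 _)
    · rw [inv_mul_lt_one₀ (hs0 _)]; exact hsmono n
  set V : ℕ → Set Mat := fun n => {ζ | n = 0 ∨ ∃ η ∈ E, frobNorm (ζ - η) < (|C| + 1) / (n + 1)}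
    with hV
  have hVo : ∀ n, IsOpen (V n) := by
    intro n
    have : V n = {ζ | n = 0} ∪ ⋃ η ∈ E, {ζ | frobNorm (ζ - η) < (|C| + 1) / (n + 1)} := by
      ext ζ; simp [hV]
    rw [this]
    refine isOpen_const.union (isOpen_biUnion fun η _ => ?_)
    exact isOpen_lt (aux_frobNorm_cont.comp (continuous_id.sub continuous_const)) continuous_const
  refine ⟨fun n => interior (rcHull ((fun ζ => s (n + 1) • ζ) '' E)) ∩ V n,
    fun n => isOpen_interior.inter (hVo n), ?_, ?_, ?_⟩
  · intro n ζ hζ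
    refine ⟨(fun ζ => s (n + 1) • ζ) '' E, ?_, hEc.image (continuous_const_smul _),
      interior_subset hζ.1⟩
    rintro _ ⟨η, hη, rfl⟩
    refine ⟨hsub _ η hη, Or.inr ⟨η, hη, ?_⟩⟩
    have e : s (n + 1) • η - η = (s (n + 1) - 1) • η := by module
    have hn : (0 : ℝ) ≤ n := Nat.cast_nonneg n
    have e2 : |s (n + 1) - 1| = d / (((n + 1 : ℕ) : ℝ) + 2) := by
      simp only [hs]
      rw [abs_sub_comm, abs_of_pos (by have := (hfrac (n + 1)).1; linarith)]
      ring
    show frobNorm (s (n + 1) • η - η) < _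
    rw [e, aux_frobNorm_smul, e2, div_mul_eq_mul_div]
    have hF := hC' η hη
    have hF0 : 0 ≤ frobNorm η := Real.sqrt_nonneg _
    apply div_lt_div₀
    · nlinarith
    · push_cast; linarith
    · positivity
    · positivity
  · intro r hr
    obtain ⟨N, hN⟩ := exists_nat_gt ((|C| + 1) / r)
    refine ⟨N + 1, fun n hn ζ hζ => ?_⟩
    rcases hζ.2 with h | ⟨η, hη, h⟩
    · omega
    · have h1 : distE ζ E ≤ frobNorm (ζ - η) := by
        apply csInf_le
        · refine ⟨0, ?_⟩
          rintro _ ⟨_, _, rfl⟩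
          exact Real.sqrt_nonneg _
        · exact ⟨η, hη, rfl⟩
      have h2 : (|C| + 1) / ((n : ℝ) + 1) ≤ r := by
        have : (N : ℝ) + 1 ≤ n := by exact_mod_cast hn
        rw [div_lt_iff₀ hr] at hN
        rw [div_le_iff₀ (by positivity)]
        nlinarith
      linarith
  · refine ⟨?_, Or.inl rfl⟩
    apply aux_int_smul (hs0 _).ne'
    apply hball
    rw [Real.dist_eq]
    have := hfrac 1
    simp only [hs]
    push_cast at this ⊢
    rw [abs_sub_comm, abs_of_pos] <;> linarith
end
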